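/- Fix positive integers b, d, and k, set D = 2^{k/d}, and assume D ≥ 2^b. Fix any choice of the subspaces 𝕍_1,…,𝕍_k defining 𝕐_k. Then there is a constant C = C(b,d) such that for every semi-algebraic set S ⊆ ℝ^d of complexity at most b and every σ ∈ {−1,1}^k, the set I_{S,σ} = {y ∈ 𝕐_k : S ∩ {u ∈ ℝ^d : σ_1 P_1(u) > 0,…, σ_k P_k(u) > 0} ≠ ∅} (where (P_1,…,P_k) is the tuple associated to y) is a semi-algebraic subset of 𝕐_k that can be expressed as a Boolean combination of at most e^{D^C} polynomials, each of degree at most D^{C·d}. -/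

import Mathlib

open MvPolynomial

/-- A set `S ⊆ ℝ^d` is semi-algebraic of complexity at most `b`. -/
def IsSemiAlgebraicOfComplexity (d b : ℕ) (S : Set (Fin d → ℝ)) : Prop :=
  ∃ (P : Fin b → MvPolynomial (Fin d) ℝ) (τ : Fin b → Bool) (φ : (Fin b → Prop) → Prop),
    (∀ i, (P i).totalDegree ≤ b) ∧
    S = {x | φ fun i => if τ i then eval x (P i) < 0 else eval x (P i) = 0}

/-- The set `T ⊆ ℝ^M` is defined by a Boolean combination of (at most) `L` polynomials, each of
degree at most `t`. -/
def DefinedByPolys {M : ℕ} (T : Set (Fin M → ℝ)) (L : ℕ) (t : ℝ) : Prop :=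
  ∃ (Q : Fin L → MvPolynomial (Fin M) ℝ) (τ : Fin L → Bool) (φ : (Fin L → Prop) → Prop),
    (∀ i, ((Q i).totalDegree : ℝ) ≤ t) ∧
    T = {x | φ fun i => if τ i then eval x (Q i) < 0 else eval x (Q i) = 0}

/-!
The set `I_{S,σ}` is the projection along `u ∈ ℝ^d` of a set described by at most `2 ^ k`
polynomials of degree at most `2 ^ k` in `(u, y)`. So it suffices to eliminate one real variable at
the cost of passing from `s` polynomials of degree `t` to `s ^ t ^ 12` polynomials of degree
`t ^ 12`, and to do this `d` times.

Regard the `s` polynomials as polynomials `f i` in the variable to be eliminated. The remaining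
variables have to determine which sign vectors `f` realizes on the line. A sign vector is realized
near `±∞`, at a root of some `f i`, or, by Rolle's theorem, at a root of some `(f i * f j)'`. Such a
polynomial has at most `2 * t` roots, so a sign vector occurs at one of them as soon as each of its
restrictions to `2 * t` members of `f` does: otherwise choose at every root a member at which the
signs differ. The number of roots with given signs of `2 * t` polynomials is a combination of Tarski
queries of products of these polynomials with exponents in `{0, 1, 2}`; working with `2 * t` members
at a time keeps the degrees independent of `s`.

A Tarski query is the signature of a Hermite matrix, whose entries are polynomials in the
coefficients by Newton's identities. The characteristic polynomial of a real symmetric matrix has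
only real roots, and for such polynomials Descartes' rule of signs is exact; hence the signature is
determined by the signs of the coefficients of the characteristic polynomial.
-/

section Descartes

open Polynomial

lemma coeff_comp_neg_X {R : Type*} [CommRing R] (p : R[X]) (i : ℕ) :
    (p.comp (-Polynomial.X)).coeff i = (-1) ^ i * p.coeff i := by
  rw [neg_eq_neg_one_mul, ← Polynomial.C_1, ← Polynomial.C_neg, comp_C_mul_X_coeff, mul_comm]

lemma eraseLead_comp_neg_X {R : Type*} [CommRing R] (p : R[X]) :
    (p.comp (-Polynomial.X)).eraseLead = p.eraseLead.comp (-Polynomial.X) := by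
  ext i
  simp only [eraseLead_coeff, coeff_comp_neg_X, natDegree_eq_of_degree_eq degree_comp_neg_X,
    mul_ite, mul_zero]

lemma card_eq_countP_pos_add_countP_neg_add_count_zero {R : Type*} [Zero R]
    [LinearOrder R] (s : Multiset R) :
    s.card = s.countP (0 < ·) + s.countP (· < 0) + s.count 0 := by
  induction s using Multiset.induction_on with
  | empty => simp
  | cons a s ih =>
    simp only [Multiset.card_cons, Multiset.countP_cons, Multiset.count_cons]
    rcases lt_trichotomy a 0 with h | h | h
    · rw [if_neg h.not_gt, if_pos h, if_neg h.ne']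
      omega
    · rw [if_neg h.not_gt, if_neg h.not_lt, if_pos h.symm]
      omega
    · rw [if_pos h, if_neg h.not_gt, if_neg h.ne]
      omega

lemma degree_congr_of_sign_coeff {R : Type*} [Semiring R] [LinearOrder R] {p q : R[X]}
    (h : ∀ i, SignType.sign (p.coeff i) = SignType.sign (q.coeff i)) :
    p.degree = q.degree := by
  have hsupp : p.support = q.support := Finset.ext fun i ↦ by
    rw [Polynomial.mem_support_iff, Polynomial.mem_support_iff, ← sign_ne_zero, h, sign_ne_zero]
  rw [degree, degree, hsupp]

lemma signVariations_congr {R : Type*} [Semiring R] [LinearOrder R] {p q : R[X]}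
    (h : ∀ i, SignType.sign (p.coeff i) = SignType.sign (q.coeff i)) :
    p.signVariations = q.signVariations := by
  have hcoeffs : p.coeffList.map SignType.sign = q.coeffList.map SignType.sign := by
    simp only [coeffList, degree_congr_of_sign_coeff h, List.map_reverse, List.map_map,
      Function.comp_def, h]
  simp only [signVariations, hcoeffs]

variable {R : Type*} [CommRing R] [LinearOrder R] [IsStrictOrderedRing R]

lemma not_sign_eq_neg_and_sign_eq_neg_of_succ {a c : R} (hc : c ≠ 0) (m : ℕ) :
    ¬(SignType.sign a = -SignType.sign c ∧
      SignType.sign ((-1) ^ (m + 1) * a) = -SignType.sign ((-1) ^ m * c)) := by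
  rcases m.even_or_odd with hm | hm <;>
    simp only [pow_succ, hm.neg_one_pow, neg_mul, one_mul, neg_neg, Left.sign_neg] <;>
    rintro ⟨h₁, h₂⟩ <;>
    · rw [h₁] at h₂
      have := sign_ne_zero.mpr hc
      revert h₂ this
      generalize SignType.sign c = s
      decide +revert

lemma signVariations_add_signVariations_comp_neg_X_le (p : R[X]) :
    p.signVariations + (p.comp (-Polynomial.X)).signVariations + p.natTrailingDegree ≤
      p.natDegree := by
  induction hn : p.natDegree using Nat.strong_induction_on generalizing p with
  | _ n ih =>
  subst hn
  rcases eq_or_ne p 0 with rfl | hp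
  · simp
  have hpc : p.comp (-Polynomial.X) ≠ 0 := comp_neg_X_eq_zero_iff.not.mpr hp
  rw [signVariations_eq_eraseLead_add_ite hp, signVariations_eq_eraseLead_add_ite hpc,
    eraseLead_comp_neg_X, comp_neg_X_leadingCoeff_eq, comp_neg_X_leadingCoeff_eq]
  by_cases hq : p.eraseLead = 0
  · simpa [hq, hp] using p.natTrailingDegree_le_natDegree
  · have hlt : p.eraseLead.natDegree < p.natDegree :=
      p.eraseLead_natDegree_lt_or_eraseLead_eq_zero.resolve_right hq
    have htrail : p.natTrailingDegree ≤ p.eraseLead.natTrailingDegree := by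
      refine le_natTrailingDegree hq fun i hi ↦ ?_
      rw [eraseLead_coeff, coeff_eq_zero_of_lt_natTrailingDegree hi, ite_self]
    have ihq := ih _ hlt p.eraseLead rfl
    have hflip := not_sign_eq_neg_and_sign_eq_neg_of_succ (a := p.leadingCoeff)
      (leadingCoeff_ne_zero.mpr hq) p.eraseLead.natDegree
    rcases Nat.lt_or_ge (p.eraseLead.natDegree + 1) p.natDegree with h | h
    · split_ifs <;> omega
    · rw [← show p.natDegree = p.eraseLead.natDegree + 1 by omega] at hflip
      split_ifs with h₁ h₂ <;> first | omega | exact absurd ⟨h₁, h₂⟩ hflip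

lemma countP_pos_roots_comp_neg_X (p : R[X]) :
    (p.comp (-Polynomial.X)).roots.countP (0 < ·) = p.roots.countP (· < 0) := by
  rw [roots_comp_neg_X, Multiset.countP_map, Multiset.countP_eq_card_filter]
  simp only [Left.neg_pos_iff]

/- When all roots are real, the two counts add up to `natDegree - rootMultiplicity 0`, which bounds
the sum of the two variations; so neither of the inequalities of Descartes' rule is strict. -/
lemma countP_roots_eq_signVariations_of_splits {p : R[X]} (hs : p.Splits) :
    p.roots.countP (0 < ·) = p.signVariations ∧
      p.roots.countP (· < 0) = (p.comp (-Polynomial.X)).signVariations := by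
  have hpos := roots_countP_pos_le_signVariations (P := p)
  have hneg := roots_countP_pos_le_signVariations (P := p.comp (-Polynomial.X))
  rw [countP_pos_roots_comp_neg_X] at hneg
  have hsum := signVariations_add_signVariations_comp_neg_X_le p
  have hcard := card_eq_countP_pos_add_countP_neg_add_count_zero p.roots
  rw [← hs.natDegree_eq_card_roots, count_roots, rootMultiplicity_eq_natTrailingDegree'] at hcard
  omega

lemma countP_roots_congr_of_splits {p q : R[X]} (hp : p.Splits) (hq : q.Splits)
    (h : ∀ i, SignType.sign (p.coeff i) = SignType.sign (q.coeff i)) :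
    p.roots.countP (0 < ·) = q.roots.countP (0 < ·) ∧
      p.roots.countP (· < 0) = q.roots.countP (· < 0) := by
  obtain ⟨hp₁, hp₂⟩ := countP_roots_eq_signVariations_of_splits hp
  obtain ⟨hq₁, hq₂⟩ := countP_roots_eq_signVariations_of_splits hq
  rw [hp₁, hp₂, hq₁, hq₂]
  refine ⟨signVariations_congr h, signVariations_congr fun i ↦ ?_⟩
  simp only [coeff_comp_neg_X, sign_mul, h]

end Descartes

section Signature

open QuadraticMap QuadraticForm

lemma sigPos_comp_of_surjective {𝕜 M N : Type*} [Field 𝕜] [LinearOrder 𝕜] [AddCommGroup M]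
    [Module 𝕜 M] [FiniteDimensional 𝕜 M] [AddCommGroup N] [Module 𝕜 N] [FiniteDimensional 𝕜 N]
    (Q : QuadraticForm 𝕜 N) {L : M →ₗ[𝕜] N} (hL : Function.Surjective L) :
    sigPos (Q.comp L) = sigPos Q := by
  apply le_antisymm
  · obtain ⟨V, hV, hpos⟩ := exists_finrank_eq_sigPos_and_posDef (Q.comp L)
    have hinj : Function.Injective (L.domRestrict V) := by
      refine (injective_iff_map_eq_zero _).mpr fun v hv ↦ ?_
      by_contra hv0
      have := hpos v hv0
      rw [restrict_apply, comp_apply, show L v = 0 from hv, map_zero] at this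
      exact this.false
    rw [← hV, ← LinearMap.finrank_range_of_inj hinj]
    refine le_sigPos_of_posDef Q ?_
    rintro ⟨-, v, rfl⟩ hv
    exact hpos v fun h ↦ hv (by simp [h])
  · obtain ⟨V, hV, hpos⟩ := exists_finrank_eq_sigPos_and_posDef Q
    obtain ⟨s, hs⟩ := L.exists_rightInverse_of_surjective (LinearMap.range_eq_top.mpr hL)
    have hLs (x : N) : L (s x) = x := LinearMap.congr_fun hs x
    have hinj : Function.Injective (s.domRestrict V) :=
      (Function.LeftInverse.injective hLs).comp Subtype.val_injective
    rw [← hV, ← LinearMap.finrank_range_of_inj hinj]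
    refine le_sigPos_of_posDef _ ?_
    rintro ⟨-, v, rfl⟩ hv
    have := hpos v fun h ↦ hv (by simp [h])
    simpa only [restrict_apply, comp_apply, LinearMap.domRestrict_apply, hLs] using this

lemma sigNeg_comp_of_surjective {𝕜 M N : Type*} [Field 𝕜] [LinearOrder 𝕜] [AddCommGroup M]
    [Module 𝕜 M] [FiniteDimensional 𝕜 M] [AddCommGroup N] [Module 𝕜 N] [FiniteDimensional 𝕜 N]
    (Q : QuadraticForm 𝕜 N) {L : M →ₗ[𝕜] N} (hL : Function.Surjective L) :
    sigNeg (Q.comp L) = sigNeg Q :=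
  sigPos_comp_of_surjective (-Q) hL

section Hermitian

variable {n : Type*} [Fintype n] [DecidableEq n] {A : Matrix n n ℝ}

open Matrix

lemma toQuadraticForm'_eq_comp_weightedSumSquares (hA : A.IsHermitian) :
    A.toQuadraticForm' = (weightedSumSquares ℝ hA.eigenvalues).comp
      (toLin' (star (hA.eigenvectorUnitary : Matrix n n ℝ))) := by
  ext v
  have hdiag : v ᵥ* (hA.eigenvectorUnitary : Matrix n n ℝ) =
      star (hA.eigenvectorUnitary : Matrix n n ℝ) *ᵥ v := by
    rw [star_eq_conjTranspose, conjTranspose_eq_transpose_of_trivial, mulVec_transpose]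
  have hspec := hA.spectral_theorem
  rw [Unitary.conjStarAlgAut_apply] at hspec
  have hquad : A.toQuadraticForm' v = v ⬝ᵥ A *ᵥ v := toLinearMap₂'_apply' A v v
  rw [hquad, QuadraticMap.comp_apply, weightedSumSquares_apply, toLin'_apply]
  conv_lhs => rw [hspec, ← mulVec_mulVec, ← mulVec_mulVec, dotProduct_mulVec, hdiag]
  simp only [dotProduct, mulVec_diagonal, Function.comp_apply, RCLike.ofReal_real_eq_id, id_eq,
    smul_eq_mul, mul_left_comm]

lemma toLin'_star_eigenvectorUnitary_surjective (hA : A.IsHermitian) :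
    Function.Surjective (toLin' (star (hA.eigenvectorUnitary : Matrix n n ℝ))) := fun v ↦
  ⟨(hA.eigenvectorUnitary : Matrix n n ℝ) *ᵥ v, by
    rw [toLin'_apply, mulVec_mulVec, Unitary.coe_star_mul_self, one_mulVec]⟩

lemma sigPos_toQuadraticForm'_eq_countP_roots_charpoly (hA : A.IsHermitian) :
    sigPos A.toQuadraticForm' = A.charpoly.roots.countP (0 < ·) := by
  rw [toQuadraticForm'_eq_comp_weightedSumSquares hA,
    sigPos_comp_of_surjective _ (toLin'_star_eigenvectorUnitary_surjective hA),
    sigPos_weightedSumSquares, hA.roots_charpoly_eq_eigenvalues, Multiset.countP_map,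
    Set.ncard_eq_toFinset_card', Set.toFinset_ofPred]
  rfl

lemma sigNeg_toQuadraticForm'_eq_countP_roots_charpoly (hA : A.IsHermitian) :
    sigNeg A.toQuadraticForm' = A.charpoly.roots.countP (· < 0) := by
  rw [toQuadraticForm'_eq_comp_weightedSumSquares hA,
    sigNeg_comp_of_surjective _ (toLin'_star_eigenvectorUnitary_surjective hA),
    sigNeg_weightedSumSquares, hA.roots_charpoly_eq_eigenvalues, Multiset.countP_map,
    Set.ncard_eq_toFinset_card', Set.toFinset_ofPred]
  rfl

end Hermitian

section Hankel

open ComplexConjugate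

/-- The real-linear map evaluating at `z : ℂ` the real polynomial of degree less than `m` with a
given coefficient vector. -/
noncomputable def evalCoeffs (m : ℕ) (z : ℂ) : (Fin m → ℝ) →ₗ[ℝ] ℂ :=
  Fintype.linearCombination ℝ fun i ↦ z ^ (i : ℕ)

lemma evalCoeffs_apply {m : ℕ} (z : ℂ) (v : Fin m → ℝ) :
    evalCoeffs m z v = ∑ i, (v i : ℂ) * z ^ (i : ℕ) := by
  simp only [evalCoeffs, Fintype.linearCombination_apply, Complex.real_smul]

lemma evalCoeffs_conj {m : ℕ} (z : ℂ) (v : Fin m → ℝ) :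
    evalCoeffs m (conj z) v = conj (evalCoeffs m z v) := by
  simp only [evalCoeffs_apply, map_sum, map_mul, map_pow, Complex.conj_ofReal]

lemma exists_evalCoeffs_eq {m : ℕ} {Z : Finset ℂ} (hm : Z.card ≤ m)
    (hZ : ∀ z ∈ Z, conj z ∈ Z) {c : ℂ → ℂ} (hc : ∀ z ∈ Z, c (conj z) = conj (c z)) :
    ∃ v, ∀ z ∈ Z, evalCoeffs m z v = c z := by
  set p := Lagrange.interpolate Z id c
  have hdeg : p.degree < m :=
    (Lagrange.degree_interpolate_lt c Function.injective_id.injOn).trans_le (by exact_mod_cast hm)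
  have hsum (z : ℂ) : p.eval z = ∑ i : Fin m, p.coeff i * z ^ (i : ℕ) :=
    (Polynomial.eval_eq_sum_degreeLTEquiv (Polynomial.mem_degreeLT.mpr hdeg) z)
  have heval (z : ℂ) (hz : z ∈ Z) : p.eval z = c z :=
    Lagrange.eval_interpolate_at_node c Function.injective_id.injOn hz
  refine ⟨fun i ↦ (p.coeff i).re, fun z hz ↦ ?_⟩
  calc evalCoeffs m z (fun i ↦ (p.coeff i).re)
      = (p.eval z + conj (p.eval (conj z))) / 2 := by
        simp only [evalCoeffs_apply, hsum, map_sum, map_mul, map_pow, Complex.conj_conj,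
          Complex.re_eq_add_conj, ← Finset.sum_add_distrib, Finset.sum_div]
        exact Finset.sum_congr rfl fun i _ ↦ by ring
    _ = c z := by
        rw [heval z hz, heval _ (hZ z hz), hc z hz, Complex.conj_conj, add_self_div_two]

lemma quadraticForm_hankel_apply {m : ℕ} {A : Matrix (Fin m) (Fin m) ℝ} {Z : Finset ℂ} {w : ℂ → ℂ}
    (hA : ∀ i j, (A i j : ℂ) = ∑ z ∈ Z, w z * z ^ ((i : ℕ) + j)) (v : Fin m → ℝ) :
    A.toQuadraticForm' v = ∑ z ∈ Z, (w z * evalCoeffs m z v ^ 2).re := by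
  have hquad : A.toQuadraticForm' v = ∑ i, ∑ j, v i * (A i j * v j) := by
    simp only [Matrix.toQuadraticForm', LinearMap.BilinMap.toQuadraticMap_apply,
      Matrix.toLinearMap₂'_apply', dotProduct, Matrix.mulVec, Finset.mul_sum]
  rw [← Complex.re_sum, hquad, ← Complex.ofReal_re (∑ i, _)]
  congr 1
  push_cast
  calc ∑ i, ∑ j, (v i : ℂ) * (A i j * v j)
      = ∑ i, ∑ j, ∑ z ∈ Z, w z * (v i * z ^ (i : ℕ)) * (v j * z ^ (j : ℕ)) := by
        simp only [hA, Finset.sum_mul, Finset.mul_sum, pow_add]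
        refine Finset.sum_congr rfl fun i _ ↦ Finset.sum_congr rfl fun j _ ↦
          Finset.sum_congr rfl fun z _ ↦ by ring
    _ = ∑ z ∈ Z, ∑ i, ∑ j, w z * (v i * z ^ (i : ℕ)) * (v j * z ^ (j : ℕ)) :=
        Finset.sum_comm_cycle
    _ = ∑ z ∈ Z, w z * evalCoeffs m z v ^ 2 := by
        refine Finset.sum_congr rfl fun z _ ↦ ?_
        rw [pow_two, evalCoeffs_apply, Finset.sum_mul_sum]
        simp only [Finset.mul_sum, mul_assoc]

/- The factor `I` makes the real part of the value at `conj z` the imaginary part of the value at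
`z`. -/
lemma exists_twisted_sqrt {w : ℂ → ℂ} (hw : ∀ z, w (conj z) = conj (w z)) :
    ∃ t : ℂ → ℂ, (∀ z, z.im = 0 → t z = 1) ∧
      (∀ z, z.im ≠ 0 → t (conj z) = Complex.I * conj (t z)) ∧
      ∀ z, z.im ≠ 0 → w z = ((SignType.sign z.im : ℝ) : ℂ) * t z ^ 2 := by
  choose s hs using fun z ↦ IsAlgClosed.exists_pow_nat_eq (w z) two_pos
  refine ⟨fun z ↦ if 0 < z.im then s z else if z.im < 0 then Complex.I * conj (s (conj z)) else 1,
    fun z hz ↦ by simp [hz], fun z hz ↦ ?_, fun z hz ↦ ?_⟩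
  · rcases hz.lt_or_gt with h | h
    · simp [h, h.not_gt, ← mul_assoc]
    · simp [h, h.not_gt]
  · rcases hz.lt_or_gt with h | h
    · simp [h, h.not_gt, mul_pow, ← map_pow, hs, hw]
    · simp [h, hs]

/-- The weights that diagonalize over `ℝ` the quadratic form `∑ z, Re (w z * f(z) ^ 2)` in the
real polynomial `f`: a pair of conjugate non-real points contributes one positive and one negative
square. -/
noncomputable def realWeight (w : ℂ → ℂ) (z : ℂ) : ℝ :=
  if z.im = 0 then (w z).re else 2 * SignType.sign z.im

lemma sum_re_mul_sq_eq_sum_realWeight {Z : Finset ℂ} (hZ : ∀ z ∈ Z, conj z ∈ Z) {w t f : ℂ → ℂ}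
    (hf : ∀ z, f (conj z) = conj (f z)) (ht_real : ∀ z, z.im = 0 → t z = 1)
    (ht_conj : ∀ z, z.im ≠ 0 → t (conj z) = Complex.I * conj (t z))
    (ht_sq : ∀ z, z.im ≠ 0 → w z = ((SignType.sign z.im : ℝ) : ℂ) * t z ^ 2) :
    ∑ z ∈ Z, (w z * f z ^ 2).re = ∑ z ∈ Z, realWeight w z * (t z * f z).re ^ 2 := by
  set h : ℂ → ℝ := fun z ↦ realWeight w z * (t z * f z).re ^ 2
  have hpair (z : ℂ) : (w z * f z ^ 2).re = (h z + h (conj z)) / 2 := by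
    by_cases hz : z.im = 0
    · have hfz : (f z).im = 0 :=
        Complex.conj_eq_iff_im.mp (by rw [← hf, Complex.conj_eq_iff_im.mpr hz])
      have hre : (w z * f z ^ 2).re = (w z).re * (f z).re ^ 2 := by
        rw [pow_two, Complex.mul_re, Complex.mul_re, Complex.mul_im, hfz]
        ring
      simp only [hre, h, realWeight, hz, Complex.conj_eq_iff_im.mpr hz, ht_real z hz, if_true,
        one_mul, add_self_div_two]
    · have him : (t (conj z) * f (conj z)).re = (t z * f z).im := by
        rw [ht_conj z hz, hf, mul_assoc, ← map_mul, Complex.I_mul_re, Complex.conj_im, neg_neg]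
      rw [ht_sq z hz, mul_assoc, ← mul_pow, Complex.re_ofReal_mul, pow_two, Complex.mul_re]
      simp only [h, realWeight, Complex.conj_im, neg_eq_zero, if_neg hz, him, Left.sign_neg,
        SignType.coe_neg]
      ring
  have hswap : ∑ z ∈ Z, h (conj z) = ∑ z ∈ Z, h z :=
    Finset.sum_nbij' conj conj hZ hZ (by simp) (by simp) (by simp)
  rw [Finset.sum_congr rfl fun z _ ↦ hpair z, ← Finset.sum_div, Finset.sum_add_distrib, hswap,
    add_self_div_two]

lemma sum_sign_realWeight {Z : Finset ℂ} (hZ : ∀ z ∈ Z, conj z ∈ Z) (w : ℂ → ℂ) :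
    ∑ z ∈ Z, (SignType.sign (realWeight w z) : ℤ) =
      ∑ z ∈ Z with z.im = 0, (SignType.sign (w z).re : ℤ) := by
  rw [← Finset.sum_filter_add_sum_filter_not Z (fun z ↦ z.im = 0)]
  have hnonreal : ∑ z ∈ Z with ¬z.im = 0, (SignType.sign (realWeight w z) : ℤ) = 0 := by
    refine Finset.sum_involution (fun z _ ↦ conj z) ?_ ?_ ?_ ?_
    · intro z hz
      simp [realWeight, (Finset.mem_filter.mp hz).2, sign_mul, Left.sign_neg]
    · intro z hz _ h
      exact (Finset.mem_filter.mp hz).2 (Complex.conj_eq_iff_im.mp h)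
    · intro z hz
      simpa using ⟨hZ z (Finset.mem_filter.mp hz).1, (Finset.mem_filter.mp hz).2⟩
    · simp
  rw [hnonreal, add_zero]
  exact Finset.sum_congr rfl fun z hz ↦ by rw [realWeight, if_pos (Finset.mem_filter.mp hz).2]

lemma surjective_re_mul_evalCoeffs {m : ℕ} {Z : Finset ℂ} (hm : Z.card ≤ m)
    (hZ : ∀ z ∈ Z, conj z ∈ Z) {t : ℂ → ℂ} (ht0 : ∀ z ∈ Z, t z ≠ 0)
    (ht_real : ∀ z, z.im = 0 → t z = 1)
    (ht_conj : ∀ z, z.im ≠ 0 → t (conj z) = Complex.I * conj (t z)) :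
    Function.Surjective (LinearMap.pi fun z : Z ↦
      Complex.reLm ∘ₗ LinearMap.mulLeft ℝ (t z) ∘ₗ evalCoeffs m z) := by
  intro y
  let y' : ℂ → ℝ := fun z ↦ if hz : z ∈ Z then y ⟨z, hz⟩ else 0
  obtain ⟨v, hv⟩ := exists_evalCoeffs_eq hm hZ
    (c := fun z ↦ if z.im = 0 then (y' z : ℂ) else (y' z + y' (conj z) * Complex.I) / t z) (by
      intro z hz
      by_cases him : z.im = 0
      · simp [him, Complex.conj_eq_iff_im.mpr him]
      · have := ht0 z hz
        simp only [Complex.conj_im, neg_eq_zero, him, if_false, Complex.conj_conj, ht_conj z him,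
          map_div₀, map_add, map_mul, Complex.conj_ofReal, Complex.conj_I]
        rw [div_eq_div_iff (mul_ne_zero Complex.I_ne_zero (by simpa)) (by simpa)]
        linear_combination (y' (conj z) * conj (t z)) * Complex.I_sq)
  refine ⟨v, funext fun z ↦ ?_⟩
  have hyz : y' z = y z := by simp [y']
  by_cases him : (z : ℂ).im = 0
  · simp [hv z z.2, him, ht_real z him, hyz]
  · simp [hv z z.2, him, mul_div_cancel₀ _ (ht0 z z.2), hyz]

lemma sigPos_sub_sigNeg_hankel {m : ℕ} {A : Matrix (Fin m) (Fin m) ℝ} {Z : Finset ℂ} {w : ℂ → ℂ}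
    (hm : Z.card ≤ m) (hZ : ∀ z ∈ Z, conj z ∈ Z) (hw : ∀ z, w (conj z) = conj (w z))
    (hw0 : ∀ z ∈ Z, w z ≠ 0) (hA : ∀ i j, (A i j : ℂ) = ∑ z ∈ Z, w z * z ^ ((i : ℕ) + j)) :
    (sigPos A.toQuadraticForm' : ℤ) - sigNeg A.toQuadraticForm' =
      ∑ z ∈ Z with z.im = 0, (SignType.sign (w z).re : ℤ) := by
  obtain ⟨t, ht_real, ht_conj, ht_sq⟩ := exists_twisted_sqrt hw
  have ht0 (z) (hz : z ∈ Z) : t z ≠ 0 := by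
    by_cases him : z.im = 0
    · simp [ht_real z him]
    · intro h
      exact hw0 z hz (by simp [ht_sq z him, h])
  have hsurj := surjective_re_mul_evalCoeffs hm hZ ht0 ht_real ht_conj
  have hcomp : A.toQuadraticForm' = (weightedSumSquares ℝ fun z : Z ↦ realWeight w z).comp
      (LinearMap.pi fun z : Z ↦
        Complex.reLm ∘ₗ LinearMap.mulLeft ℝ (t z) ∘ₗ evalCoeffs m z) := by
    ext v
    rw [quadraticForm_hankel_apply hA, sum_re_mul_sq_eq_sum_realWeight hZ
      (fun z ↦ evalCoeffs_conj z v) ht_real ht_conj ht_sq, ← Finset.sum_coe_sort]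
    simp [weightedSumSquares_apply, pow_two]
  have hsign (x : ℝ) :
      (SignType.sign x : ℤ) = (if 0 < x then 1 else 0) - (if x < 0 then 1 else 0) := by
    rcases lt_trichotomy x 0 with h | rfl | h <;> simp [*, not_lt_of_gt]
  rw [← sum_sign_realWeight hZ, hcomp, sigPos_comp_of_surjective _ hsurj,
    sigNeg_comp_of_surjective _ hsurj, sigPos_weightedSumSquares, sigNeg_weightedSumSquares,
    ← Finset.sum_coe_sort, Finset.sum_congr rfl fun z _ ↦ hsign _, Finset.sum_sub_distrib,
    Finset.sum_boole, Finset.sum_boole]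
  simp only [Set.ncard_eq_toFinset_card', Set.toFinset_ofPred]

end Hankel

end Signature

section Newton

open scoped Polynomial

variable {R S : Type*} [CommRing R] [CommRing S]

lemma sum_pow_succ_add_sum_esymm_mul_sum_pow (s : Multiset R) (k : ℕ) :
    (s.map (· ^ (k + 1))).sum +
        ∑ i ∈ Finset.range k, (-1) ^ (i + 1) * s.esymm (i + 1) * (s.map (· ^ (k - i))).sum =
      (-1) ^ k * ((k + 1) * s.esymm (k + 1)) := by
  obtain ⟨n, f, rfl⟩ : ∃ (n : ℕ) (f : Fin n → R), s = Finset.univ.val.map f := by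
    induction s using Quot.inductionOn with
    | _ l => exact ⟨l.length, l.get, by simp⟩
  have hpsum (j : ℕ) : aeval f (psum (Fin n) R j) =
      ((Finset.univ.val.map f).map (· ^ j)).sum := by
    simp only [psum, map_sum, map_pow, aeval_X, Multiset.map_map]
    rfl
  have h := congrArg (aeval f) (mul_esymm_eq_sum (Fin n) R (k + 1))
  rw [Finset.sum_filter, Finset.Nat.sum_antidiagonal_eq_sum_range_succ_mk,
    Finset.sum_range_succ, if_neg (by simp), add_zero, Finset.sum_congr rfl fun i hi ↦
      if_pos (show (i, k + 1 - i).1 < k + 1 from Finset.mem_range.mp hi),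
    Finset.sum_range_succ'] at h
  simp only [map_mul, map_pow, map_neg, map_one, map_natCast, map_add, map_sum, hpsum,
    aeval_esymm_eq_multiset_esymm, Nat.add_sub_add_right, Nat.cast_add, Nat.cast_one] at h
  rw [h, ← mul_assoc, ← pow_add, Even.neg_one_pow ⟨k + 1, by ring⟩]
  simp only [Multiset.esymm, Multiset.powersetCard_zero_left, Multiset.map_singleton,
    Multiset.prod_zero, Multiset.sum_singleton, Nat.sub_zero]
  ring

/-- For a polynomial `g` of formal degree `n` with leading coefficient `a = g.coeff n`, the `i`-th
coefficient below the leading one of the monic polynomial with roots `a z`, for `z` a root of `g`.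
It is `a ^ (i + 1)` times `(-1) ^ (i + 1)` times the elementary symmetric function of degree `i + 1`
of the roots. -/
def scaledCoeff (g : R[X]) (n i : ℕ) : R :=
  if i < n then g.coeff (n - 1 - i) * g.coeff n ^ i else 0

/-- For a polynomial `g` of formal degree `n` with leading coefficient `a`, the sum of the `k`-th
powers of `a z` over the roots `z` of `g`, computed from the coefficients by Newton's recursion.
The formal degree makes this commute with ring homomorphisms that kill leading coefficients. -/
def scaledPowerSum (g : R[X]) (n : ℕ) : ℕ → R
  | 0 => n
  | k + 1 => -((k + 1) * scaledCoeff g n k + ∑ i : Fin k, scaledCoeff g n i *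
      scaledPowerSum g n (k - i))

lemma map_scaledPowerSum (φ : R →+* S) (g : R[X]) (n k : ℕ) :
    φ (scaledPowerSum g n k) = scaledPowerSum (g.map φ) n k := by
  have hcoeff (i : ℕ) : φ (scaledCoeff g n i) = scaledCoeff (g.map φ) n i := by
    simp only [scaledCoeff, apply_ite φ, map_mul, map_pow, Polynomial.coeff_map, map_zero]
  induction k using Nat.strong_induction_on with
  | _ k ih =>
  cases k with
  | zero => simp only [scaledPowerSum, map_natCast]
  | succ k =>
    simp only [scaledPowerSum, map_neg, map_add, map_mul, map_sum, map_natCast, map_one, hcoeff]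
    congr 2
    exact Finset.sum_congr rfl fun i _ ↦ by rw [ih _ (by omega)]

variable {K : Type*} [Field K]

lemma scaledCoeff_eq_esymm_roots {g : K[X]} (hg : g.Splits) (i : ℕ) :
    scaledCoeff g g.natDegree i = (-g.leadingCoeff) ^ (i + 1) * g.roots.esymm (i + 1) := by
  rw [scaledCoeff]
  split_ifs with hi
  · rw [Polynomial.coeff_eq_esymm_roots_of_splits hg (by omega),
      show g.natDegree - (g.natDegree - 1 - i) = i + 1 by omega, neg_pow, Polynomial.leadingCoeff]
    ring
  · have hcard := g.card_roots'
    rw [Multiset.esymm, Multiset.powersetCard_eq_empty _ (by omega), Multiset.map_zero,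
      Multiset.sum_zero, mul_zero]

lemma scaledPowerSum_eq_sum_roots {g : K[X]} (hg : g.Splits) (k : ℕ) :
    scaledPowerSum g g.natDegree k = g.leadingCoeff ^ k * (g.roots.map (· ^ k)).sum := by
  induction k using Nat.strong_induction_on with
  | _ k ih =>
  cases k with
  | zero => simp [scaledPowerSum, hg.natDegree_eq_card_roots]
  | succ k =>
    have hsum : ∑ i : Fin k, scaledCoeff g g.natDegree i *
          scaledPowerSum g g.natDegree (k - i) =
        g.leadingCoeff ^ (k + 1) * ∑ i ∈ Finset.range k,
          (-1) ^ (i + 1) * g.roots.esymm (i + 1) * (g.roots.map (· ^ (k - i))).sum := by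
      rw [Finset.mul_sum, ← Fin.sum_univ_eq_sum_range fun i ↦ g.leadingCoeff ^ (k + 1) *
        ((-1) ^ (i + 1) * g.roots.esymm (i + 1) * (g.roots.map (· ^ (k - i))).sum)]
      refine Finset.sum_congr rfl fun i _ ↦ ?_
      rw [ih _ (by omega), scaledCoeff_eq_esymm_roots hg, neg_pow,
        show k + 1 = i + 1 + (k - i) by omega, pow_add _ _ (k - i)]
      ring
    rw [scaledPowerSum, hsum, scaledCoeff_eq_esymm_roots hg, neg_pow]
    linear_combination -g.leadingCoeff ^ (k + 1) *
      sum_pow_succ_add_sum_esymm_mul_sum_pow g.roots k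

end Newton

section Hermite

open QuadraticMap
open scoped Polynomial ComplexConjugate

section CommRing

variable {R S : Type*} [CommRing R] [CommRing S]

/-- Hermite's matrix of a polynomial `g` of formal degree `n`, twisted by a polynomial `q` of degree
at most `m`. With `a = g.coeff n`, its `(i, j)` entry is `a ^ (2 * (m + n))` times the sum of
`q z * z ^ (i + j)` over the roots `z` of `g`, the even power of `a` clearing the denominators
without changing signs. -/
def hermiteMatrix (g q : R[X]) (n m : ℕ) : Matrix (Fin n) (Fin n) R :=
  .of fun i j ↦ ∑ k ∈ Finset.range (m + 1), q.coeff k * g.coeff n ^ (2 * (m + n) - (k + (i + j))) *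
    scaledPowerSum g n (k + (i + j))

lemma hermiteMatrix_map (φ : R →+* S) (g q : R[X]) (n m : ℕ) :
    (hermiteMatrix g q n m).map φ = hermiteMatrix (g.map φ) (q.map φ) n m := by
  ext i j
  simp only [hermiteMatrix, Matrix.map_apply, Matrix.of_apply, map_sum, map_mul, map_pow,
    map_scaledPowerSum, Polynomial.coeff_map]

end CommRing

lemma hermiteMatrix_apply_eq_sum_roots {K : Type*} [Field K] {g q : K[X]} (hg : g.Splits)
    {n m : ℕ} (hn : g.natDegree = n) (hq : q.natDegree ≤ m) (i j : Fin n) :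
    hermiteMatrix g q n m i j = g.leadingCoeff ^ (2 * (m + n)) *
      (g.roots.map fun z ↦ q.eval z * z ^ ((i : ℕ) + j)).sum := by
  subst hn
  have hterm (k : ℕ) (hk : k ∈ Finset.range (m + 1)) :
      q.coeff k * g.coeff g.natDegree ^ (2 * (m + g.natDegree) - (k + (i + j))) *
          scaledPowerSum g g.natDegree (k + (i + j)) =
        (g.roots.map fun z ↦ g.leadingCoeff ^ (2 * (m + g.natDegree)) *
          (q.coeff k * z ^ k * z ^ ((i : ℕ) + j))).sum := by
    rw [Finset.mem_range] at hk
    rw [scaledPowerSum_eq_sum_roots hg, Polynomial.coeff_natDegree, ← mul_assoc,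
      mul_assoc (q.coeff k), ← pow_add, Nat.sub_add_cancel (by omega), ← Multiset.sum_map_mul_left]
    exact congrArg _ (Multiset.map_congr rfl fun z _ ↦ by ring)
  rw [hermiteMatrix, Matrix.of_apply, Finset.sum_congr rfl hterm, ← Multiset.sum_map_mul_left,
    Finset.sum, Multiset.sum_map_sum_map]
  refine congrArg _ (Multiset.map_congr rfl fun z _ ↦ ?_)
  rw [Polynomial.eval_eq_sum_range' (Nat.lt_succ_of_le hq), Finset.sum_mul, Finset.mul_sum]
  rfl

/-- The Tarski query of `q` on the zero set of `g`: the number of real roots of `g` (without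
multiplicity) at which `q` is positive minus the number of those at which it is negative. -/
noncomputable def tarskiQuery (g q : ℝ[X]) : ℤ :=
  ∑ x ∈ g.roots.toFinset, (SignType.sign (q.eval x) : ℤ)

lemma map_ofRealHom_map_conj (g : ℝ[X]) :
    (g.map Complex.ofRealHom).map (starRingEnd ℂ) = g.map Complex.ofRealHom := by
  rw [Polynomial.map_map]
  exact congrArg (g.map ·) (RingHom.ext Complex.conj_ofReal)

lemma eval_conj_map_ofRealHom (g : ℝ[X]) (z : ℂ) :
    (g.map Complex.ofRealHom).eval (conj z) = conj ((g.map Complex.ofRealHom).eval z) := by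
  conv_lhs => rw [← map_ofRealHom_map_conj, Polynomial.eval_map_apply]

lemma rootMultiplicity_conj_map_ofRealHom (g : ℝ[X]) (z : ℂ) :
    (g.map Complex.ofRealHom).rootMultiplicity (conj z) =
      (g.map Complex.ofRealHom).rootMultiplicity z := by
  conv_lhs => rw [← map_ofRealHom_map_conj]
  exact (Polynomial.eq_rootMultiplicity_map (starRingEnd ℂ).injective z).symm

lemma eval_ofReal_map_ofRealHom (g : ℝ[X]) (x : ℝ) :
    (g.map Complex.ofRealHom).eval (x : ℂ) = (g.eval x : ℝ) :=
  Polynomial.eval_map_apply Complex.ofRealHom x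

lemma sum_sign_re_eq_tarskiQuery {g q : ℝ[X]} (hg : g ≠ 0) {c : ℝ} (hc : 0 < c) :
    ∑ z ∈ (g.map Complex.ofRealHom).roots.toFinset.filter
        (fun z ↦ (q.map Complex.ofRealHom).eval z ≠ 0) with z.im = 0,
      (SignType.sign (c * (g.map Complex.ofRealHom).rootMultiplicity z *
        (q.map Complex.ofRealHom).eval z).re : ℤ) = tarskiQuery g q := by
  have himage : ((g.map Complex.ofRealHom).roots.toFinset.filter
      fun z ↦ (q.map Complex.ofRealHom).eval z ≠ 0).filter (fun z ↦ z.im = 0) =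
      (g.roots.toFinset.filter fun x ↦ q.eval x ≠ 0).image Complex.ofReal := by
    have hmem (x : ℝ) : (x : ℂ) ∈ (g.map Complex.ofRealHom).roots ↔ x ∈ g.roots := by
      rw [Polynomial.mem_roots (Polynomial.map_ne_zero hg), Polynomial.mem_roots hg,
        Polynomial.IsRoot, eval_ofReal_map_ofRealHom, Complex.ofReal_eq_zero, Polynomial.IsRoot]
    ext z
    simp only [Finset.mem_filter, Multiset.mem_toFinset, Finset.mem_image]
    constructor
    · rintro ⟨⟨hz, hqz⟩, him⟩
      obtain ⟨x, rfl⟩ : ∃ x : ℝ, (x : ℂ) = z := ⟨z.re, Complex.ext rfl him.symm⟩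
      rw [eval_ofReal_map_ofRealHom, Complex.ofReal_ne_zero] at hqz
      exact ⟨x, ⟨(hmem x).mp hz, hqz⟩, rfl⟩
    · rintro ⟨x, ⟨hx, hqx⟩, rfl⟩
      rw [eval_ofReal_map_ofRealHom, Complex.ofReal_ne_zero]
      exact ⟨⟨(hmem x).mpr hx, hqx⟩, Complex.ofReal_im x⟩
  have hsum : tarskiQuery g q =
      ∑ x ∈ g.roots.toFinset with q.eval x ≠ 0, (SignType.sign (q.eval x) : ℤ) :=
    (Finset.sum_filter_of_ne fun x _ ↦ mt fun hqx ↦ by rw [hqx, sign_zero]; rfl).symm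
  rw [himage, Finset.sum_image Complex.ofReal_injective.injOn, hsum]
  refine Finset.sum_congr rfl fun x hx ↦ ?_
  have hroot := Polynomial.isRoot_of_mem_roots
    (Multiset.mem_toFinset.mp (Finset.mem_of_mem_filter x hx))
  have hmult : 0 < (g.map Complex.ofRealHom).rootMultiplicity (x : ℂ) := by
    rwa [Polynomial.rootMultiplicity_pos (Polynomial.map_ne_zero hg), Polynomial.IsRoot,
      eval_ofReal_map_ofRealHom, Complex.ofReal_eq_zero]
  rw [eval_ofReal_map_ofRealHom, ← Complex.ofReal_natCast, ← Complex.ofReal_mul,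
    ← Complex.ofReal_mul, Complex.ofReal_re, sign_mul, sign_pos (by positivity), one_mul]

lemma hermiteMatrix_apply_eq_sum_complex_roots {g q : ℝ[X]} {m : ℕ} (hq : q.natDegree ≤ m)
    (i j : Fin g.natDegree) :
    (hermiteMatrix g q g.natDegree m i j : ℂ) =
      ∑ z ∈ (g.map Complex.ofRealHom).roots.toFinset with (q.map Complex.ofRealHom).eval z ≠ 0,
        (g.leadingCoeff ^ (2 * (m + g.natDegree)) : ℝ) *
          (g.map Complex.ofRealHom).rootMultiplicity z *
            (q.map Complex.ofRealHom).eval z * z ^ ((i : ℕ) + j) := by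
  have hmap : (hermiteMatrix g q g.natDegree m i j : ℂ) =
      hermiteMatrix (g.map Complex.ofRealHom) (q.map Complex.ofRealHom) g.natDegree m i j :=
    congr_fun₂ (hermiteMatrix_map Complex.ofRealHom g q g.natDegree m) i j
  rw [hmap, hermiteMatrix_apply_eq_sum_roots (IsAlgClosed.splits _) (Polynomial.natDegree_map _)
    ((Polynomial.natDegree_map _).le.trans hq), Polynomial.leadingCoeff_map,
    Finset.sum_multiset_map_count, Finset.mul_sum, Finset.sum_filter_of_ne]
  · refine Finset.sum_congr rfl fun z _ ↦ ?_
    rw [nsmul_eq_mul, Polynomial.count_roots, Complex.ofRealHom_eq_coe, Complex.ofReal_pow]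
    ring
  · intro z _ hne h
    exact hne (by rw [h, mul_zero, zero_mul])

lemma sigPos_sub_sigNeg_hermiteMatrix {g q : ℝ[X]} (hg : g ≠ 0) {m : ℕ} (hq : q.natDegree ≤ m) :
    (sigPos (hermiteMatrix g q g.natDegree m).toQuadraticForm' : ℤ) -
      sigNeg (hermiteMatrix g q g.natDegree m).toQuadraticForm' = tarskiQuery g q := by
  have hG0 : g.map Complex.ofRealHom ≠ 0 := Polynomial.map_ne_zero hg
  have hdeg : (g.map Complex.ofRealHom).natDegree = g.natDegree := Polynomial.natDegree_map _
  have hc : 0 < g.leadingCoeff ^ (2 * (m + g.natDegree)) :=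
    Even.pow_pos (even_two_mul _) (Polynomial.leadingCoeff_ne_zero.mpr hg)
  rw [← sum_sign_re_eq_tarskiQuery hg hc]
  refine sigPos_sub_sigNeg_hankel ?_ ?_ ?_ ?_ ?_
  · exact (Finset.card_filter_le _ _).trans <| (Multiset.toFinset_card_le _).trans <|
      (Polynomial.card_roots' _).trans hdeg.le
  · intro z hz
    simpa only [Finset.mem_filter, Multiset.mem_toFinset, Polynomial.mem_roots hG0,
      Polynomial.IsRoot, eval_conj_map_ofRealHom, map_eq_zero, ne_eq] using hz
  · intro z
    simp only [map_mul, Complex.conj_ofReal, map_natCast, rootMultiplicity_conj_map_ofRealHom,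
      eval_conj_map_ofRealHom]
  · intro z hz
    obtain ⟨hz, hqz⟩ := Finset.mem_filter.mp hz
    have hmult := (Polynomial.rootMultiplicity_pos hG0).mpr <|
      Polynomial.isRoot_of_mem_roots (Multiset.mem_toFinset.mp hz)
    exact mul_ne_zero (mul_ne_zero (by exact_mod_cast hc.ne') (by exact_mod_cast hmult.ne')) hqz
  · exact hermiteMatrix_apply_eq_sum_complex_roots hq

lemma hermiteMatrix_isHermitian (g q : ℝ[X]) (n m : ℕ) : (hermiteMatrix g q n m).IsHermitian :=
  .ext fun i j ↦ by
    simp only [hermiteMatrix, Matrix.of_apply, add_comm (j : ℕ) i, star_trivial]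

lemma tarskiQuery_eq_countP_roots_charpoly {g q : ℝ[X]} (hg : g ≠ 0) {m : ℕ}
    (hq : q.natDegree ≤ m) :
    tarskiQuery g q = (hermiteMatrix g q g.natDegree m).charpoly.roots.countP (0 < ·) -
      (hermiteMatrix g q g.natDegree m).charpoly.roots.countP (· < 0) := by
  have hA := hermiteMatrix_isHermitian g q g.natDegree m
  rw [← sigPos_sub_sigNeg_hermiteMatrix hg hq, sigPos_toQuadraticForm'_eq_countP_roots_charpoly hA,
    sigNeg_toQuadraticForm'_eq_countP_roots_charpoly hA]

lemma tarskiQuery_congr {g q g' q' : ℝ[X]} (hg : g ≠ 0) (hg' : g' ≠ 0) {m n : ℕ}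
    (hq : q.natDegree ≤ m) (hq' : q'.natDegree ≤ m) (hn : g.natDegree = n) (hn' : g'.natDegree = n)
    (h : ∀ i, SignType.sign ((hermiteMatrix g q n m).charpoly.coeff i) =
      SignType.sign ((hermiteMatrix g' q' n m).charpoly.coeff i)) :
    tarskiQuery g q = tarskiQuery g' q' := by
  subst hn
  have hcount := countP_roots_congr_of_splits (hermiteMatrix_isHermitian g q _ m).splits_charpoly
    (hermiteMatrix_isHermitian g' q' _ m).splits_charpoly h
  rw [tarskiQuery_eq_countP_roots_charpoly hg hq, tarskiQuery_eq_countP_roots_charpoly hg' hq', hn',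
    hcount.1, hcount.2]

end Hermite

section CoeffDegree

open scoped Polynomial

variable {σ τ k : Type*}

section CommSemiring

variable [CommSemiring k]

lemma totalDegree_mul_le {p q : MvPolynomial σ k} {a b : ℕ}
    (hp : p.totalDegree ≤ a) (hq : q.totalDegree ≤ b) : (p * q).totalDegree ≤ a + b :=
  (totalDegree_mul p q).trans (add_le_add hp hq)

lemma totalDegree_pow_le {p : MvPolynomial σ k} {a : ℕ}
    (hp : p.totalDegree ≤ a) (n : ℕ) : (p ^ n).totalDegree ≤ n * a :=
  (totalDegree_pow p n).trans (Nat.mul_le_mul_left n hp)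

lemma totalDegree_natCast_eq_zero (n : ℕ) :
    (n : MvPolynomial σ k).totalDegree = 0 := by
  rw [← map_natCast (C (σ := σ) (R := k)), totalDegree_C]

lemma totalDegree_aeval_le {f : τ → MvPolynomial σ k} {a : ℕ}
    (hf : ∀ i, (f i).totalDegree ≤ a) (p : MvPolynomial τ k) :
    (aeval f p).totalDegree ≤ p.totalDegree * a := by
  rw [aeval_def, eval₂_eq]
  refine totalDegree_finsetSum_le fun d hd ↦ ?_
  calc (algebraMap k (MvPolynomial σ k) (p.coeff d) * ∏ i ∈ d.support, f i ^ d i).totalDegree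
      ≤ 0 + ∑ i ∈ d.support, d i * a :=
        totalDegree_mul_le (totalDegree_C _).le <| (totalDegree_finsetProd _ _).trans <|
          Finset.sum_le_sum fun i _ ↦ totalDegree_pow_le (hf i) _
    _ = (∑ i ∈ d.support, d i) * a := by rw [zero_add, Finset.sum_mul]
    _ ≤ p.totalDegree * a := Nat.mul_le_mul_right a (le_totalDegree hd)

/-- The coefficients of `p`, a univariate polynomial over a polynomial ring, have total degree at
most `a`. -/
def CoeffDegreeLE (p : (MvPolynomial σ k)[X]) (a : ℕ) : Prop :=
  ∀ i, (p.coeff i).totalDegree ≤ a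

variable {g q : (MvPolynomial σ k)[X]} {a : ℕ}

lemma CoeffDegreeLE.mono {b : ℕ} (hg : CoeffDegreeLE g a) (hab : a ≤ b) : CoeffDegreeLE g b :=
  fun i ↦ (hg i).trans hab

lemma CoeffDegreeLE.mul {b : ℕ} (hg : CoeffDegreeLE g a) (hq : CoeffDegreeLE q b) :
    CoeffDegreeLE (g * q) (a + b) := fun i ↦ by
  rw [Polynomial.coeff_mul]
  exact totalDegree_finsetSum_le fun x _ ↦ totalDegree_mul_le (hg x.1) (hq x.2)

lemma CoeffDegreeLE.prod {ι : Type*} {s : Finset ι} {f : ι → (MvPolynomial σ k)[X]} {b : ι → ℕ}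
    (hf : ∀ i ∈ s, CoeffDegreeLE (f i) (b i)) : CoeffDegreeLE (∏ i ∈ s, f i) (∑ i ∈ s, b i) := by
  induction s using Finset.cons_induction with
  | empty =>
    intro i
    rw [Finset.prod_empty, Polynomial.coeff_one]
    split_ifs <;> simp
  | cons j s hj ih =>
    rw [Finset.prod_cons, Finset.sum_cons]
    exact (hf j (Finset.mem_cons_self j s)).mul (ih fun i hi ↦ hf i (Finset.mem_cons_of_mem hi))

lemma CoeffDegreeLE.pow (hg : CoeffDegreeLE g a) (n : ℕ) : CoeffDegreeLE (g ^ n) (n * a) := by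
  simpa using CoeffDegreeLE.prod (s := Finset.range n) fun _ _ ↦ hg

lemma CoeffDegreeLE.derivative (hg : CoeffDegreeLE g a) :
    CoeffDegreeLE (Polynomial.derivative g) a := fun i ↦ by
  rw [Polynomial.coeff_derivative, ← Nat.cast_succ]
  exact totalDegree_mul_le (hg _) (totalDegree_natCast_eq_zero _).le

end CommSemiring

section CommRing

variable [CommRing k] {g q : (MvPolynomial σ k)[X]} {a : ℕ}

lemma totalDegree_coeff_charpoly_le {ι : Type*} [Fintype ι] [DecidableEq ι]
    {A : Matrix ι ι (MvPolynomial σ k)} {a : ℕ} (hA : ∀ i j, (A i j).totalDegree ≤ a) (l : ℕ) :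
    (A.charpoly.coeff l).totalDegree ≤ Fintype.card ι * a := by
  rcases subsingleton_or_nontrivial k with _ | _
  · exact (congrArg totalDegree (Subsingleton.elim _ 0)).trans_le (by simp)
  have huniv : A.charpoly.coeff l =
      aeval (fun ij : ι × ι ↦ A ij.1 ij.2) ((Matrix.charpoly.univ k ι).coeff l) := by
    rw [aeval_def, algebraMap_eq, ← coe_eval₂Hom, Matrix.charpoly.univ_coeff_eval₂Hom]
    rfl
  have hdeg : ((Matrix.charpoly.univ k ι).coeff l).totalDegree ≤ Fintype.card ι := by
    rcases le_or_gt l (Fintype.card ι) with hl | hl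
    · exact (Matrix.charpoly.univ_coeff_isHomogeneous k ι l _
        (Nat.add_sub_cancel' hl)).totalDegree_le.trans (Nat.sub_le _ _)
    · rw [Polynomial.coeff_eq_zero_of_natDegree_lt (by rwa [Matrix.charpoly.univ_natDegree]),
        totalDegree_zero]
      exact Nat.zero_le _
  rw [huniv]
  calc _ ≤ ((Matrix.charpoly.univ k ι).coeff l).totalDegree * a :=
        totalDegree_aeval_le (fun _ ↦ hA _ _) _
    _ ≤ Fintype.card ι * a := Nat.mul_le_mul_right a hdeg

lemma CoeffDegreeLE.totalDegree_scaledCoeff_le (hg : CoeffDegreeLE g a) (n i : ℕ) :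
    (scaledCoeff g n i).totalDegree ≤ (i + 1) * a := by
  rw [scaledCoeff]
  split_ifs
  · linarith [totalDegree_mul_le (hg (n - 1 - i)) (totalDegree_pow_le (hg n) i)]
  · simp

lemma CoeffDegreeLE.totalDegree_scaledPowerSum_le (hg : CoeffDegreeLE g a) (n l : ℕ) :
    (scaledPowerSum g n l).totalDegree ≤ l * a := by
  induction l using Nat.strong_induction_on with
  | _ l ih =>
  cases l with
  | zero => simp [scaledPowerSum, totalDegree_natCast_eq_zero]
  | succ l =>
    rw [scaledPowerSum, totalDegree_neg]
    refine (totalDegree_add _ _).trans (max_le ?_ (totalDegree_finsetSum_le fun i _ ↦ ?_))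
    · have := totalDegree_mul_le (totalDegree_natCast_eq_zero (σ := σ) (k := k) (l + 1)).le
        (hg.totalDegree_scaledCoeff_le n l)
      rwa [Nat.cast_add, Nat.cast_one, zero_add] at this
    · refine (totalDegree_mul_le (hg.totalDegree_scaledCoeff_le n i)
        (ih (l - i) (by omega))).trans_eq ?_
      rw [← add_mul]
      congr 1
      omega

lemma CoeffDegreeLE.totalDegree_hermiteMatrix_le (hg : CoeffDegreeLE g a) (hq : CoeffDegreeLE q a)
    {n m : ℕ} (i j : Fin n) :
    (hermiteMatrix g q n m i j).totalDegree ≤ (2 * (m + n) + 1) * a := by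
  rw [hermiteMatrix, Matrix.of_apply]
  refine totalDegree_finsetSum_le fun l hl ↦ ?_
  rw [Finset.mem_range] at hl
  refine (totalDegree_mul_le (totalDegree_mul_le (hq l) (totalDegree_pow_le (hg n) _))
    (hg.totalDegree_scaledPowerSum_le n _)).trans_eq ?_
  rw [add_assoc, ← add_mul, Nat.sub_add_cancel (by omega)]
  ring

lemma CoeffDegreeLE.charpoly_hermiteMatrix (hg : CoeffDegreeLE g a) (hq : CoeffDegreeLE q a)
    (n m : ℕ) :
    CoeffDegreeLE (hermiteMatrix g q n m).charpoly (n * ((2 * (m + n) + 1) * a)) := fun i ↦ by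
  simpa only [Fintype.card_fin] using
    totalDegree_coeff_charpoly_le (hg.totalDegree_hermiteMatrix_le hq (n := n) (m := m)) i

end CommRing

end CoeffDegree

section SignDetermined

open scoped Polynomial

variable {σ τ α β : Type*} {s s' t t' : ℕ} {Φ : (σ → ℝ) → α}

/-- The function `Φ` on `ℝ^σ` factors through the signs of `s` polynomials of total degree at
most `t`. For a predicate `Φ`, this means that `{x | Φ x}` is a Boolean combination of sign
conditions on these polynomials. -/
def SignDetermined (s t : ℕ) (Φ : (σ → ℝ) → α) : Prop :=
  ∃ A : Finset (MvPolynomial σ ℝ), A.card ≤ s ∧ (∀ p ∈ A, p.totalDegree ≤ t) ∧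
    ∀ x x', (∀ p ∈ A, SignType.sign (eval x p) = SignType.sign (eval x' p)) → Φ x = Φ x'

lemma signDetermined_sign_eval {p : MvPolynomial σ ℝ} (hp : p.totalDegree ≤ t) :
    SignDetermined 1 t fun x ↦ SignType.sign (eval x p) :=
  ⟨{p}, by simp, by simpa using hp, fun _ _ h ↦ h p (Finset.mem_singleton_self p)⟩

lemma SignDetermined.mono (h : SignDetermined s t Φ) (hs : s ≤ s') (ht : t ≤ t') :
    SignDetermined s' t' Φ :=
  let ⟨A, hA, hdeg, hdet⟩ := h
  ⟨A, hA.trans hs, fun p hp ↦ (hdeg p hp).trans ht, hdet⟩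

lemma SignDetermined.of_congr {Ψ : (σ → ℝ) → β} (h : SignDetermined s t Φ)
    (hΨ : ∀ x x', Φ x = Φ x' → Ψ x = Ψ x') : SignDetermined s t Ψ :=
  let ⟨A, hA, hdeg, hdet⟩ := h
  ⟨A, hA, hdeg, fun x x' hx ↦ hΨ x x' (hdet x x' hx)⟩

lemma SignDetermined.prodMk {Ψ : (σ → ℝ) → β} (hΦ : SignDetermined s t Φ)
    (hΨ : SignDetermined s' t Ψ) : SignDetermined (s + s') t fun x ↦ (Φ x, Ψ x) := by
  classical
  obtain ⟨A, hA, hAdeg, hAdet⟩ := hΦ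
  obtain ⟨B, hB, hBdeg, hBdet⟩ := hΨ
  refine ⟨A ∪ B, (Finset.card_union_le A B).trans (add_le_add hA hB), fun p hp ↦ ?_,
    fun x x' h ↦ ?_⟩
  · exact (Finset.mem_union.mp hp).elim (hAdeg p) (hBdeg p)
  · exact Prod.ext (hAdet x x' fun p hp ↦ h p (Finset.mem_union_left B hp))
      (hBdet x x' fun p hp ↦ h p (Finset.mem_union_right A hp))

lemma SignDetermined.pi {ι : Type*} [Fintype ι] {α : ι → Type*} {Φ : ∀ i, (σ → ℝ) → α i}
    (h : ∀ i, SignDetermined s t (Φ i)) :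
    SignDetermined (Fintype.card ι * s) t fun x i ↦ Φ i x := by
  classical
  choose A hA hdeg hdet using h
  refine ⟨Finset.univ.biUnion A, ?_, fun p hp ↦ ?_, fun x x' hx ↦ funext fun i ↦ ?_⟩
  · simpa using Finset.card_biUnion_le_card_mul Finset.univ A s fun i _ ↦ hA i
  · obtain ⟨i, -, hi⟩ := Finset.mem_biUnion.mp hp
    exact hdeg i p hi
  · exact hdet i x x' fun p hp ↦ hx p (Finset.mem_biUnion.mpr ⟨i, Finset.mem_univ i, hp⟩)

variable {g q : (MvPolynomial σ ℝ)[X]} {n m a : ℕ}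

lemma CoeffDegreeLE.signDetermined_sign_coeff (hg : CoeffDegreeLE g a) (hn : g.natDegree ≤ n) :
    SignDetermined (n + 1) a fun x i ↦ SignType.sign ((g.map (eval x)).coeff i) := by
  have := SignDetermined.pi fun i : Fin (n + 1) ↦ signDetermined_sign_eval (hg i)
  rw [Fintype.card_fin, mul_one] at this
  refine this.of_congr fun x x' h ↦ funext fun i ↦ ?_
  rw [Polynomial.coeff_map, Polynomial.coeff_map]
  rcases lt_or_ge i (n + 1) with hi | hi
  · exact congrFun h ⟨i, hi⟩
  · rw [Polynomial.coeff_eq_zero_of_natDegree_lt (by omega), map_zero (eval x),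
      map_zero (eval x')]

lemma CoeffDegreeLE.signDetermined_tarskiQuery (hg : CoeffDegreeLE g a) (hq : CoeffDegreeLE q a)
    (hn : g.natDegree ≤ n) (hm : q.natDegree ≤ m) :
    SignDetermined ((n + 1) * (n + 2)) ((n * (2 * (m + n) + 1) + 1) * a) fun x ↦
      tarskiQuery (g.map (eval x)) (q.map (eval x)) := by
  have hgcoeff := (hg.signDetermined_sign_coeff hn).mono le_rfl
    (show a ≤ (n * (2 * (m + n) + 1) + 1) * a from Nat.le_mul_of_pos_left a (Nat.succ_pos _))
  have hcharpoly := SignDetermined.pi fun l : Fin (n + 1) ↦ by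
    have hl : (l : ℕ) ≤ n := Nat.lt_succ_iff.mp l.2
    refine ((hg.charpoly_hermiteMatrix hq l m).signDetermined_sign_coeff (n := n) ?_).mono
      le_rfl (show _ ≤ (n * (2 * (m + n) + 1) + 1) * a from ?_)
    · rwa [Matrix.charpoly_natDegree_eq_dim, Fintype.card_fin]
    · calc l * ((2 * (m + l) + 1) * a) ≤ n * ((2 * (m + n) + 1) * a) := by gcongr
        _ ≤ (n * (2 * (m + n) + 1) + 1) * a := by nlinarith
  rw [Fintype.card_fin] at hcharpoly
  refine ((hgcoeff.prodMk hcharpoly).mono (by nlinarith) le_rfl).of_congr fun x x' h ↦ ?_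
  obtain ⟨hcoeff, hcharpoly⟩ := Prod.mk.inj h
  have hdeg := degree_congr_of_sign_coeff (congrFun hcoeff)
  have hzero : g.map (eval x) = 0 ↔ g.map (eval x') = 0 := by
    rw [← Polynomial.degree_eq_bot, hdeg, Polynomial.degree_eq_bot]
  rcases eq_or_ne (g.map (eval x)) 0 with h0 | h0
  · rw [h0, hzero.mp h0, tarskiQuery, tarskiQuery, Polynomial.roots_zero, Multiset.toFinset_zero,
      Finset.sum_empty, Finset.sum_empty]
  refine tarskiQuery_congr h0 (mt hzero.mpr h0) (Polynomial.natDegree_map_le.trans hm)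
    (Polynomial.natDegree_map_le.trans hm) rfl
    (Polynomial.natDegree_eq_of_degree_eq hdeg.symm) fun i ↦ ?_
  have hl : (g.map (eval x)).natDegree < n + 1 :=
    Nat.lt_succ_of_le (Polynomial.natDegree_map_le.trans hn)
  simpa only [← Matrix.charpoly_map, hermiteMatrix_map] using
    congrFun (congrFun hcharpoly ⟨_, hl⟩) i

end SignDetermined

section SignVector

open scoped Polynomial

variable {ι : Type*}

/-- The coefficients, as a polynomial in `s`, of the indicator function of `s = ε` on the set of
signs `{-1, 0, 1}`. -/
def signIndicatorCoeff : SignType → Fin 3 → ℚ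
  | .zero => ![1, 0, -1]
  | .pos => ![0, 1 / 2, 1 / 2]
  | .neg => ![0, -1 / 2, 1 / 2]

lemma sum_signIndicatorCoeff_mul_pow (ε s : SignType) :
    ∑ a : Fin 3, signIndicatorCoeff ε a * (s : ℚ) ^ (a : ℕ) = if s = ε then 1 else 0 := by
  have h : (0 : SignType) ≠ -1 := by decide
  cases ε <;> cases s <;> norm_num [signIndicatorCoeff, Fin.sum_univ_succ, h]

lemma cast_sign_eval_prod_pow [Fintype ι] (f : ι → ℝ[X]) (a : ι → ℕ) (x : ℝ) :
    (SignType.sign ((∏ i, f i ^ a i).eval x) : ℚ) =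
      ∏ i, (SignType.sign ((f i).eval x) : ℚ) ^ a i := by
  let φ : ℝ[X] →* ℚ := ((SignType.castHom (α := ℚ)).comp signHom).toMonoidHom.comp
    (Polynomial.evalRingHom x).toMonoidHom
  change φ (∏ i, f i ^ a i) = ∏ i, φ (f i) ^ a i
  simp only [map_prod, map_pow]

/-- The signs at `x` of the members of a family of polynomials. -/
noncomputable def signVector (f : ι → ℝ[X]) (x : ℝ) : ι → SignType :=
  fun i ↦ SignType.sign ((f i).eval x)

lemma card_filter_signVector_eq [Fintype ι] [DecidableEq ι] (g : ℝ[X]) (f : ι → ℝ[X])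
    (ε : ι → SignType) :
    ((g.roots.toFinset.filter fun x ↦ signVector f x = ε).card : ℚ) =
      ∑ a : ι → Fin 3, (∏ i, signIndicatorCoeff (ε i) (a i)) *
        tarskiQuery g (∏ i, f i ^ (a i : ℕ)) := by
  have hind : ∀ x, (if signVector f x = ε then (1 : ℚ) else 0) = ∑ a : ι → Fin 3,
      (∏ i, signIndicatorCoeff (ε i) (a i)) *
        SignType.sign ((∏ i, f i ^ (a i : ℕ)).eval x) := fun x ↦ by
    calc (if signVector f x = ε then (1 : ℚ) else 0)
        = ∏ i, if SignType.sign ((f i).eval x) = ε i then (1 : ℚ) else 0 := by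
          simp [Finset.prod_boole, signVector, funext_iff]
      _ = ∏ i, ∑ a : Fin 3, signIndicatorCoeff (ε i) a *
            (SignType.sign ((f i).eval x) : ℚ) ^ (a : ℕ) := by
          simp only [sum_signIndicatorCoeff_mul_pow]
      _ = _ := by
          simp only [Fintype.prod_sum, Finset.prod_mul_distrib, cast_sign_eval_prod_pow]
  rw [Finset.card_filter, Nat.cast_sum]
  simp only [Nat.cast_ite, Nat.cast_one, Nat.cast_zero, hind, tarskiQuery, Int.cast_sum,
    SignType.intCast_cast, Finset.mul_sum]
  exact Finset.sum_comm

lemma exists_root_signVector_eq [Fintype ι] {g g' : ℝ[X]} {f f' : ι → ℝ[X]}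
    (h : ∀ a : ι → Fin 3,
      tarskiQuery g (∏ i, f i ^ (a i : ℕ)) = tarskiQuery g' (∏ i, f' i ^ (a i : ℕ)))
    {x : ℝ} (hx : x ∈ g.roots) : ∃ x' ∈ g'.roots, signVector f' x' = signVector f x := by
  classical
  have hcard : (g.roots.toFinset.filter fun y ↦ signVector f y = signVector f x).card =
      (g'.roots.toFinset.filter fun y ↦ signVector f' y = signVector f x).card :=
    Nat.cast_injective (R := ℚ) <| by simp only [card_filter_signVector_eq, h]
  have hpos : 0 < (g.roots.toFinset.filter fun y ↦ signVector f y = signVector f x).card :=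
    Finset.card_pos.mpr ⟨x, Finset.mem_filter.mpr ⟨Multiset.mem_toFinset.mpr hx, rfl⟩⟩
  obtain ⟨x', hx'⟩ := Finset.card_pos.mp (hcard ▸ hpos)
  obtain ⟨hroot, hsign⟩ := Finset.mem_filter.mp hx'
  exact ⟨x', Multiset.mem_toFinset.mp hroot, hsign⟩

lemma exists_forall_of_forall_fin {α : Type*} [Nonempty ι] {s : Finset α} {r : ℕ} (hs : s.card ≤ r)
    {P : α → ι → Prop} (h : ∀ c : Fin r → ι, ∃ x ∈ s, ∀ i, P x (c i)) :
    ∃ x ∈ s, ∀ i, P x i := by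
  by_contra! hfail
  choose! w hw using hfail
  obtain ⟨e⟩ : Nonempty (s ↪ Fin r) := Function.Embedding.nonempty_of_card_le (by simpa using hs)
  obtain ⟨x, hx, hP⟩ := h (Function.extend e (fun y ↦ w y) fun _ ↦ Classical.arbitrary ι)
  refine hw x hx ?_
  simpa only [e.injective.extend_apply] using hP (e ⟨x, hx⟩)

lemma sign_eval_eq_of_forall_notMem_roots {p : ℝ[X]} {x y : ℝ}
    (h : ∀ z ∈ Set.uIcc x y, z ∉ p.roots) :
    SignType.sign (p.eval x) = SignType.sign (p.eval y) := by
  rcases eq_or_ne p 0 with rfl | hp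
  · simp
  have h0 : (0 : ℝ) ∉ Set.uIcc (p.eval x) (p.eval y) := fun h0 ↦ by
    obtain ⟨z, hz, hz0⟩ := intermediate_value_uIcc p.continuous.continuousOn h0
    exact h z hz ((Polynomial.mem_roots hp).mpr hz0)
  rw [Set.mem_uIcc] at h0
  push Not at h0
  rcases lt_trichotomy (p.eval x) 0 with hx | hx | hx
  · rw [sign_neg hx, sign_neg (h0.1 hx.le)]
  · exact absurd ((Polynomial.mem_roots hp).mpr hx) (h x Set.left_mem_uIcc)
  · rw [sign_pos hx, sign_pos (not_le.mp fun hy ↦ (h0.2 hy).not_ge hx.le)]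

lemma eventually_sign_eval_eq_sign_leadingCoeff (p : ℝ[X]) :
    ∀ᶠ y in Filter.atTop, SignType.sign (p.eval y) = SignType.sign p.leadingCoeff := by
  obtain ⟨φ, hφ, heq⟩ := p.isEquivalent_atTop_lead.exists_eq_mul
  filter_upwards [heq, hφ.eventually (lt_mem_nhds one_pos), Filter.eventually_gt_atTop 0]
    with y hy hφy hy0
  rw [hy, Pi.mul_apply, sign_mul, sign_mul, sign_pos (pow_pos hy0 _), sign_pos hφy, mul_one,
    one_mul]

lemma sign_leadingCoeff_mem_range_signVector [Finite ι] (f : ι → ℝ[X]) :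
    (fun i ↦ SignType.sign (f i).leadingCoeff) ∈ Set.range (signVector f) := by
  obtain ⟨y, hy⟩ := (Filter.eventually_all.mpr fun i ↦
    eventually_sign_eval_eq_sign_leadingCoeff (f i)).exists
  exact ⟨y, funext hy⟩

lemma signVector_eq_sign_leadingCoeff {f : ι → ℝ[X]} {x : ℝ}
    (hx : ∀ i, ∀ z ∈ (f i).roots, z < x) :
    signVector f x = fun i ↦ SignType.sign (f i).leadingCoeff := funext fun i ↦ by
  obtain ⟨y, hy, hxy⟩ := ((eventually_sign_eval_eq_sign_leadingCoeff (f i)).and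
    (Filter.eventually_ge_atTop x)).exists
  refine (sign_eval_eq_of_forall_notMem_roots fun z hz hroot ↦ ?_).trans hy
  rw [Set.uIcc_of_le hxy] at hz
  exact (hx i z hroot).not_ge hz.1

lemma exists_mem_roots_derivative_mul {p q : ℝ[X]} {α β : ℝ} (hα : α ∈ p.roots)
    (hβ : β ∈ q.roots) (hαβ : α < β) :
    ∃ c ∈ Set.Ioo α β, c ∈ (Polynomial.derivative (p * q)).roots := by
  obtain ⟨hp, hpα⟩ := Polynomial.mem_roots'.mp hα
  obtain ⟨hq, hqβ⟩ := Polynomial.mem_roots'.mp hβ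
  have hpqα : (p * q).eval α = 0 := by
    rw [Polynomial.eval_mul, Polynomial.IsRoot.def.mp hpα, zero_mul]
  have hpqβ : (p * q).eval β = 0 := by
    rw [Polynomial.eval_mul, Polynomial.IsRoot.def.mp hqβ, mul_zero]
  obtain ⟨c, hc, hc0⟩ := exists_hasDerivAt_eq_zero hαβ (p * q).continuous.continuousOn
    (hpqα.trans hpqβ.symm) fun y _ ↦ (p * q).hasDerivAt y
  refine ⟨c, hc, (Polynomial.mem_roots fun h ↦ mul_ne_zero hp hq ?_).mpr hc0⟩
  rw [Polynomial.eq_C_of_derivative_eq_zero h] at hpqα ⊢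
  rw [Polynomial.eval_C] at hpqα
  rw [hpqα, Polynomial.C_0]

lemma exists_gap_of_notMem {α : Type*} [LinearOrder α] {s : Finset α} {x : α} (hx : x ∉ s) :
    (∀ y ∈ s, y < x) ∨ (∀ y ∈ s, x < y) ∨
      ∃ a ∈ s, ∃ b ∈ s, x ∈ Set.Ioo a b ∧ ∀ y ∈ s, y ∉ Set.Ioo a b := by
  by_contra! h
  obtain ⟨⟨b₀, hb₀, hxb₀⟩, ⟨a₀, ha₀, hxa₀⟩, h⟩ := h
  have hne : ∀ y ∈ s, y ≠ x := fun y hy hyx ↦ hx (hyx ▸ hy)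
  obtain ⟨a, ha, hmax⟩ := (s.filter (· < x)).exists_max_image id
    ⟨a₀, Finset.mem_filter.mpr ⟨ha₀, hxa₀.lt_of_ne (hne a₀ ha₀)⟩⟩
  obtain ⟨b, hb, hmin⟩ := (s.filter (x < ·)).exists_min_image id
    ⟨b₀, Finset.mem_filter.mpr ⟨hb₀, hxb₀.lt_of_ne (hne b₀ hb₀).symm⟩⟩
  rw [Finset.mem_filter] at ha hb
  obtain ⟨y, hy, hay, hyb⟩ := h a ha.1 b hb.1 ⟨ha.2, hb.2⟩
  rcases (hne y hy).lt_or_gt with hyx | hxy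
  · exact (hmax y (Finset.mem_filter.mpr ⟨hy, hyx⟩)).not_gt hay
  · exact (hmin y (Finset.mem_filter.mpr ⟨hy, hxy⟩)).not_gt hyb

/-- Polynomials whose roots, together with `±∞`, meet every cell of the sign partition of the line
by the family `f`: the roots of `f i` are the endpoints of the cells, and by Rolle's theorem those
of `(f i * f j)'` meet the bounded open cells. -/
noncomputable def samplePolys {R : Type*} [Semiring R] (f : ι → R[X]) : ι ⊕ ι × ι → R[X] :=
  Sum.elim f fun p ↦ Polynomial.derivative (f p.1 * f p.2)

lemma samplePolys_map {R S : Type*} [Semiring R] [Semiring S] (φ : R →+* S) (f : ι → R[X])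
    (q : ι ⊕ ι × ι) : (samplePolys f q).map φ = samplePolys (fun i ↦ (f i).map φ) q := by
  rcases q with i | p
  · rfl
  · exact (Polynomial.derivative_map _ φ).symm.trans (by rw [Polynomial.map_mul]; rfl)

lemma signVector_comp_neg_X (f : ι → ℝ[X]) (x : ℝ) :
    signVector (fun i ↦ (f i).comp (-Polynomial.X)) x = signVector f (-x) :=
  funext fun i ↦ by simp [signVector]

lemma signVector_cases [Finite ι] (f : ι → ℝ[X]) (x : ℝ) :
    (∃ q, ∃ y ∈ (samplePolys f q).roots, signVector f y = signVector f x) ∨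
      (signVector f x = fun i ↦ SignType.sign (f i).leadingCoeff) ∨
      signVector f x = fun i ↦ SignType.sign ((f i).comp (-Polynomial.X)).leadingCoeff := by
  classical
  cases nonempty_fintype ι
  let roots : Finset ℝ := Finset.univ.biUnion fun i ↦ (f i).roots.toFinset
  have hroots : ∀ y, y ∈ roots ↔ ∃ i, y ∈ (f i).roots := fun y ↦ by simp [roots]
  by_cases hx : x ∈ roots
  · obtain ⟨i, hi⟩ := (hroots x).mp hx
    exact .inl ⟨.inl i, x, hi, rfl⟩
  rcases exists_gap_of_notMem hx with htop | hbot | ⟨α, hα, β, hβ, hxαβ, hgap⟩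
  · exact .inr <| .inl <| signVector_eq_sign_leadingCoeff fun i z hz ↦
      htop z ((hroots z).mpr ⟨i, hz⟩)
  · refine .inr <| .inr ?_
    rw [← neg_neg x, ← signVector_comp_neg_X]
    refine signVector_eq_sign_leadingCoeff fun i z hz ↦ ?_
    obtain ⟨hne, hz⟩ := Polynomial.mem_roots'.mp hz
    refine lt_neg_of_lt_neg (hbot (-z) ((hroots _).mpr ⟨i, Polynomial.mem_roots'.mpr ⟨?_, ?_⟩⟩))
    · rintro h
      rw [h, Polynomial.zero_comp] at hne
      exact hne rfl
    · simpa [Polynomial.IsRoot] using hz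
  · obtain ⟨i, hi⟩ := (hroots α).mp hα
    obtain ⟨j, hj⟩ := (hroots β).mp hβ
    obtain ⟨c, hc, hroot⟩ := exists_mem_roots_derivative_mul hi hj (hxαβ.1.trans hxαβ.2)
    refine .inl ⟨.inr (i, j), c, hroot, funext fun l ↦
      sign_eval_eq_of_forall_notMem_roots fun z hz hzl ↦ ?_⟩
    exact hgap z ((hroots z).mpr ⟨l, hzl⟩) (Set.ordConnected_Ioo.uIcc_subset hc hxαβ hz)

lemma sign_leadingCoeff_congr {p q : ℝ[X]}
    (h : ∀ n, SignType.sign (p.coeff n) = SignType.sign (q.coeff n)) :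
    SignType.sign p.leadingCoeff = SignType.sign q.leadingCoeff := by
  rw [Polynomial.leadingCoeff, Polynomial.leadingCoeff,
    Polynomial.natDegree_eq_of_degree_eq (degree_congr_of_sign_coeff h), h]

/-- The product of `r` factors, each the zeroth, first or second power of a member of `f`. By
`card_filter_signVector_eq`, the Tarski queries of these products determine the sign vectors of
every `r` members of `f` at the roots of a polynomial. -/
noncomputable def queryProd {R : Type*} [CommSemiring R] {r : ℕ} (f : ι → R[X])
    (c : Fin r → ι × Fin 3) : R[X] :=
  ∏ l, f (c l).1 ^ ((c l).2 : ℕ)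

lemma queryProd_map {R S : Type*} [CommSemiring R] [CommSemiring S] (φ : R →+* S) {r : ℕ}
    (f : ι → R[X]) (c : Fin r → ι × Fin 3) :
    (queryProd f c).map φ = queryProd (fun i ↦ (f i).map φ) c := by
  simp only [queryProd, Polynomial.map_prod, Polynomial.map_pow]

lemma range_signVector_subset [Finite ι] {f f' : ι → ℝ[X]} {r : ℕ}
    (hr : ∀ q, (samplePolys f' q).natDegree ≤ r)
    (hcoeff : ∀ i n, SignType.sign ((f i).coeff n) = SignType.sign ((f' i).coeff n))
    (hquery : ∀ q (c : Fin r → ι × Fin 3),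
      tarskiQuery (samplePolys f q) (queryProd f c) =
        tarskiQuery (samplePolys f' q) (queryProd f' c)) :
    Set.range (signVector f) ⊆ Set.range (signVector f') := by
  rintro _ ⟨x, rfl⟩
  rcases signVector_cases f x with ⟨q, y, hy, hyx⟩ | hx | hx
  · have : Nonempty ι := q.elim (⟨·⟩) (⟨·.1⟩)
    have hcard : (samplePolys f' q).roots.toFinset.card ≤ r :=
      (Multiset.toFinset_card_le _).trans ((Polynomial.card_roots' _).trans (hr q))
    have hsub : ∀ c : Fin r → ι, ∃ z ∈ (samplePolys f' q).roots.toFinset,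
        ∀ l, signVector f' z (c l) = signVector f y (c l) := fun c ↦ by
      obtain ⟨z, hz, hzy⟩ := exists_root_signVector_eq (f := f ∘ c) (f' := f' ∘ c)
        (fun a ↦ hquery q fun l ↦ (c l, a l)) hy
      exact ⟨z, Multiset.mem_toFinset.mpr hz, congrFun hzy⟩
    obtain ⟨z, -, hz⟩ := exists_forall_of_forall_fin
      (P := fun z i ↦ signVector f' z i = signVector f y i) hcard hsub
    exact ⟨z, (funext hz).trans hyx⟩
  · rw [hx, funext fun i ↦ sign_leadingCoeff_congr (hcoeff i)]
    exact sign_leadingCoeff_mem_range_signVector f'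
  · have hcomp : ∀ i n, SignType.sign (((f i).comp (-Polynomial.X)).coeff n) =
        SignType.sign (((f' i).comp (-Polynomial.X)).coeff n) := fun i n ↦ by
      rw [coeff_comp_neg_X, coeff_comp_neg_X, sign_mul, sign_mul, hcoeff]
    rw [hx, funext fun i ↦ sign_leadingCoeff_congr (hcomp i)]
    obtain ⟨z, hz⟩ := sign_leadingCoeff_mem_range_signVector
      fun i ↦ (f' i).comp (-Polynomial.X)
    exact ⟨-z, (signVector_comp_neg_X f' z).symm.trans hz⟩

lemma range_signVector_congr [Finite ι] {f f' : ι → ℝ[X]} {r : ℕ}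
    (hr : ∀ q, (samplePolys f q).natDegree ≤ r) (hr' : ∀ q, (samplePolys f' q).natDegree ≤ r)
    (hcoeff : ∀ i n, SignType.sign ((f i).coeff n) = SignType.sign ((f' i).coeff n))
    (hquery : ∀ q (c : Fin r → ι × Fin 3),
      tarskiQuery (samplePolys f q) (queryProd f c) =
        tarskiQuery (samplePolys f' q) (queryProd f' c)) :
    Set.range (signVector f) = Set.range (signVector f') :=
  (range_signVector_subset hr' hcoeff hquery).antisymm <|
    range_signVector_subset hr (fun i n ↦ (hcoeff i n).symm) fun q c ↦ (hquery q c).symm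

end SignVector

section Projection

open scoped Polynomial

variable {ι σ τ : Type*} {s t : ℕ}

lemma natDegree_samplePolys_le {R : Type*} [Semiring R] {f : ι → R[X]}
    (hf : ∀ i, (f i).natDegree ≤ t) (q : ι ⊕ ι × ι) : (samplePolys f q).natDegree ≤ 2 * t := by
  rcases q with i | ⟨i, j⟩
  · exact (hf i).trans (by omega)
  · calc (Polynomial.derivative (f i * f j)).natDegree
        ≤ (f i * f j).natDegree := (Polynomial.natDegree_derivative_le _).trans (Nat.sub_le _ _)
      _ ≤ t + t := Polynomial.natDegree_mul_le_of_le (hf i) (hf j)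
      _ = 2 * t := (two_mul t).symm

lemma CoeffDegreeLE.samplePolys {f : ι → (MvPolynomial σ ℝ)[X]}
    (hf : ∀ i, CoeffDegreeLE (f i) t) (q : ι ⊕ ι × ι) :
    CoeffDegreeLE (samplePolys f q) (2 * t) := by
  rw [two_mul]
  rcases q with i | ⟨i, j⟩
  · exact (hf i).mono (Nat.le_add_right t t)
  · exact ((hf i).mul (hf j)).derivative

lemma natDegree_queryProd_le {R : Type*} [CommSemiring R] {r : ℕ} {f : ι → R[X]}
    (hf : ∀ i, (f i).natDegree ≤ t) (c : Fin r → ι × Fin 3) :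
    (queryProd f c).natDegree ≤ r * (2 * t) := by
  simpa [queryProd] using (Polynomial.natDegree_prod_le _ _).trans <|
    Finset.sum_le_card_nsmul Finset.univ (fun l ↦ (f (c l).1 ^ ((c l).2 : ℕ)).natDegree) (2 * t)
      fun l _ ↦ Polynomial.natDegree_pow_le.trans <|
        Nat.mul_le_mul (Nat.lt_succ_iff.mp (c l).2.2) (hf _)

lemma CoeffDegreeLE.queryProd {r : ℕ} {f : ι → (MvPolynomial σ ℝ)[X]}
    (hf : ∀ i, CoeffDegreeLE (f i) t) (c : Fin r → ι × Fin 3) :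
    CoeffDegreeLE (queryProd f c) (r * (2 * t)) := by
  simpa [_root_.queryProd] using CoeffDegreeLE.prod (s := Finset.univ) fun l _ ↦
    ((hf (c l).1).pow _).mono (Nat.mul_le_mul_right t (Nat.lt_succ_iff.mp (c l).2.2))

lemma card_range_signVector_bound (hs : 2 ≤ s) (ht : 2 ≤ t) :
    (s + s * s) * ((s * 3) ^ (2 * t) * ((2 * t + 1) * (2 * t + 2))) + s * (t + 1) ≤
      s ^ t ^ 12 := by
  have hpow : ∀ m, m + 1 ≤ s ^ m := fun m ↦
    Nat.lt_two_pow_self.trans_le (Nat.pow_le_pow_left hs m)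
  have hpolys : s + s * s ≤ s ^ 3 := by nlinarith [Nat.mul_le_mul hs hs]
  have hthree : s * 3 ≤ s ^ 3 := by nlinarith [Nat.mul_le_mul hs hs]
  have hquery : (2 * t + 1) * (2 * t + 2) ≤ s ^ (4 * t + 1) := by
    calc (2 * t + 1) * (2 * t + 2) ≤ s ^ (2 * t) * s ^ (2 * t + 1) :=
          Nat.mul_le_mul (hpow _) (hpow _)
      _ = s ^ (4 * t + 1) := by ring
  have hexp : 10 * t + 5 ≤ t ^ 12 := by
    calc 10 * t + 5 ≤ 2 ^ 11 * t := by omega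
      _ ≤ t ^ 11 * t := Nat.mul_le_mul_right t (Nat.pow_le_pow_left ht 11)
      _ = t ^ 12 := by ring
  calc (s + s * s) * ((s * 3) ^ (2 * t) * ((2 * t + 1) * (2 * t + 2))) + s * (t + 1)
      ≤ s ^ 3 * ((s ^ 3) ^ (2 * t) * s ^ (4 * t + 1)) + s * s ^ t := by gcongr; exact hpow t
    _ = s ^ (10 * t + 4) + s ^ (t + 1) := by ring
    _ ≤ s ^ (10 * t + 4) + s ^ (10 * t + 4) := by gcongr <;> omega
    _ = 2 * s ^ (10 * t + 4) := (two_mul _).symm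
    _ ≤ s * s ^ (10 * t + 4) := Nat.mul_le_mul_right _ hs
    _ = s ^ (10 * t + 5) := (pow_succ' s _).symm
    _ ≤ s ^ t ^ 12 := Nat.pow_le_pow_right (by omega) hexp

lemma degree_range_signVector_bound (ht : 2 ≤ t) :
    (2 * t * (2 * (2 * t * (2 * t) + 2 * t) + 1) + 1) * (2 * t * (2 * t)) ≤ t ^ 12 := by
  calc (2 * t * (2 * (2 * t * (2 * t) + 2 * t) + 1) + 1) * (2 * t * (2 * t))
      ≤ (22 * t ^ 3) * (2 * t * (2 * t)) := by
        gcongr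
        nlinarith [Nat.mul_le_mul ht ht, Nat.mul_le_mul_right (t ^ 2) ht]
    _ = 88 * t ^ 5 := by ring
    _ ≤ 2 ^ 7 * t ^ 5 := by omega
    _ ≤ t ^ 7 * t ^ 5 := Nat.mul_le_mul_right _ (Nat.pow_le_pow_left ht 7)
    _ = t ^ 12 := by ring

lemma signDetermined_range_signVector [Fintype ι] {f : ι → (MvPolynomial σ ℝ)[X]}
    (hι : Fintype.card ι ≤ s) (hdeg : ∀ i, (f i).natDegree ≤ t) (hf : ∀ i, CoeffDegreeLE (f i) t)
    (hs : 2 ≤ s) (ht : 2 ≤ t) :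
    SignDetermined (s ^ t ^ 12) (t ^ 12) fun x ↦
      Set.range (signVector fun i ↦ (f i).map (eval x)) := by
  classical
  have hsample : 2 * t ≤ 2 * t * (2 * t) := Nat.le_mul_of_pos_right _ (by omega)
  have hquery := SignDetermined.pi fun q : ι ⊕ ι × ι ↦ SignDetermined.pi
    fun c : Fin (2 * t) → ι × Fin 3 ↦
      (((CoeffDegreeLE.samplePolys hf q).mono hsample).signDetermined_tarskiQuery
        (CoeffDegreeLE.queryProd hf c) (natDegree_samplePolys_le hdeg q)
        (natDegree_queryProd_le hdeg c)).mono le_rfl (degree_range_signVector_bound ht)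
  have hcoeff := SignDetermined.pi fun i ↦ ((hf i).signDetermined_sign_coeff (hdeg i)).mono
    le_rfl (Nat.le_self_pow (by norm_num : 12 ≠ 0) t)
  refine ((hquery.prodMk hcoeff).mono ?_ le_rfl).of_congr fun x x' h ↦ ?_
  · refine le_trans ?_ (card_range_signVector_bound hs ht)
    simp only [Fintype.card_sum, Fintype.card_prod, Fintype.card_fun, Fintype.card_fin]
    gcongr
  · obtain ⟨hquery, hcoeff⟩ := Prod.mk.inj h
    have hr (x : σ → ℝ) := natDegree_samplePolys_le fun i ↦
      (Polynomial.natDegree_map_le (f := eval x)).trans (hdeg i)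
    refine range_signVector_congr (hr x) (hr x') (fun i ↦ congrFun (congrFun hcoeff i))
      fun q c ↦ ?_
    simpa only [queryProd_map, samplePolys_map] using congrFun (congrFun hquery q) c

lemma SignDetermined.exists_option {P : (Option σ → ℝ) → Prop} (h : SignDetermined s t P)
    (hs : 2 ≤ s) (ht : 2 ≤ t) :
    SignDetermined (s ^ t ^ 12) (t ^ 12) fun x : σ → ℝ ↦ ∃ y : ℝ, P fun o ↦ o.elim y x := by
  obtain ⟨A, hA, hdeg, hdet⟩ := h
  have hrange := signDetermined_range_signVector
    (f := fun p : A ↦ optionEquivLeft ℝ σ p) (by rwa [Fintype.card_coe])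
    (fun p ↦ by
      rw [natDegree_optionEquivLeft]
      exact (degreeOf_le_totalDegree _ _).trans (hdeg p p.2))
    (fun p i ↦ (totalDegree_coeff_optionEquivLeft_le ℝ σ p.1 i).trans (hdeg p p.2)) hs ht
  have hsub : ∀ {x x' : σ → ℝ},
      Set.range (signVector fun p : A ↦ (optionEquivLeft ℝ σ p).map (eval x)) =
        Set.range (signVector fun p : A ↦ (optionEquivLeft ℝ σ p).map (eval x')) →
      (∃ y : ℝ, P fun o ↦ o.elim y x) → ∃ y : ℝ, P fun o ↦ o.elim y x' := fun h ⟨y, hy⟩ ↦ by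
    obtain ⟨y', hy'⟩ := h ▸ Set.mem_range_self y
    refine ⟨y', (hdet _ _ fun p hp ↦ ?_).mp hy⟩
    simpa only [signVector, optionEquivLeft_elim_eval] using (congrFun hy' ⟨p, hp⟩).symm
  exact hrange.of_congr fun x x' h ↦ propext ⟨hsub h, hsub h.symm⟩

lemma SignDetermined.comp_right {α : Type*} {Φ : (σ → ℝ) → α} (h : SignDetermined s t Φ)
    (e : σ → τ) : SignDetermined s t fun x : τ → ℝ ↦ Φ (x ∘ e) := by
  classical
  obtain ⟨A, hA, hdeg, hdet⟩ := h
  refine ⟨A.image (rename e), Finset.card_image_le.trans hA, ?_, fun x x' hx ↦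
    hdet _ _ fun p hp ↦ ?_⟩
  · exact Finset.forall_mem_image.mpr fun p hp ↦ (totalDegree_rename_le e p).trans (hdeg p hp)
  · simpa only [eval_rename] using hx _ (Finset.mem_image_of_mem _ hp)

lemma SignDetermined.exists_fin (d : ℕ) {P : (Fin d ⊕ σ → ℝ) → Prop} (h : SignDetermined s t P)
    (hs : 2 ≤ s) (ht : 2 ≤ t) :
    SignDetermined (s ^ t ^ 24 ^ d) (t ^ 24 ^ d) fun x ↦
      ∃ u : Fin d → ℝ, P (Sum.elim u x) := by
  induction d generalizing s t with
  | zero =>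
    refine ((h.comp_right (Sum.elim finZeroElim id)).mono (Nat.le_self_pow (by positivity) s)
      (by simp)).of_congr fun x x' hx ↦ ?_
    have hcomp (x : σ → ℝ) : x ∘ Sum.elim finZeroElim id = Sum.elim finZeroElim x := by
      rw [Sum.comp_elim, Function.comp_id]
      exact congrArg (Sum.elim · x) (Subsingleton.elim _ _)
    simpa only [Fin.exists_fin_zero_pi, hcomp] using hx
  | succ d ih =>
    let e : Fin (d + 1) ⊕ σ → Option (Fin d ⊕ σ) :=
      Sum.elim (Fin.cons none (some ∘ Sum.inl)) (some ∘ Sum.inr)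
    have he (y : ℝ) (u : Fin d → ℝ) (x : σ → ℝ) :
        (fun o : Option (Fin d ⊕ σ) ↦ o.elim y (Sum.elim u x)) ∘ e =
          Sum.elim (Fin.cons (α := fun _ ↦ ℝ) y u) x := by
      ext (i | i)
      · exact Fin.cases rfl (fun _ ↦ rfl) i
      · rfl
    have hexp : 12 + 12 * 24 ^ d ≤ 24 ^ (d + 1) := by
      have : 1 ≤ 24 ^ d := Nat.one_le_pow _ _ (by norm_num)
      omega
    refine ((ih ((h.comp_right e).exists_option hs ht)
      (hs.trans (Nat.le_self_pow (by positivity) s))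
      (ht.trans (Nat.le_self_pow (by norm_num) t))).mono ?_ ?_).of_congr fun x x' hx ↦ ?_
    · rw [← pow_mul, ← pow_mul, ← pow_add]
      exact Nat.pow_le_pow_right (by omega) (Nat.pow_le_pow_right (by omega) hexp)
    · rw [← pow_mul]
      exact Nat.pow_le_pow_right (by omega) (by omega)
    · simpa only [he, Fin.exists_fin_succ_pi, exists_comm (α := ℝ)] using hx

end Projection

section Incidence

variable {σ : Type*} {d b k M s t : ℕ}

lemma sign_congr_of_atoms {a a' : ℝ} (hneg : a < 0 ↔ a' < 0) (hzero : a = 0 ↔ a' = 0) :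
    SignType.sign a = SignType.sign a' := by
  rcases lt_trichotomy a 0 with h | h | h
  · rw [sign_neg h, sign_neg (hneg.mp h)]
  · rw [h, hzero.mp h]
  · rw [sign_pos h, sign_pos ((not_lt.mp (mt hneg.mpr h.not_gt)).lt_of_ne' (mt hzero.mpr h.ne'))]

lemma SignDetermined.definedByPolys {T : Set (Fin M → ℝ)} {r : ℝ}
    (h : SignDetermined s t fun x ↦ x ∈ T) (hr : (t : ℝ) ≤ r) :
    ∃ L ≤ s * 2, DefinedByPolys T L r := by
  obtain ⟨A, hA, hdeg, hdet⟩ := h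
  let e := Fintype.equivFin (A × Bool)
  let atom (x : Fin M → ℝ) (i : Fin (Fintype.card (A × Bool))) : Prop :=
    if (e.symm i).2 then eval x (e.symm i).1.1 < 0 else eval x (e.symm i).1.1 = 0
  refine ⟨Fintype.card (A × Bool), by simpa using hA, fun i ↦ (e.symm i).1.1, fun i ↦ (e.symm i).2,
    fun φ ↦ ∃ x ∈ T, atom x = φ, fun i ↦ ?_, ?_⟩
  · exact le_trans (mod_cast hdeg _ (e.symm i).1.2) hr
  · ext x
    refine ⟨fun hx ↦ ⟨x, hx, rfl⟩, fun ⟨x', hx', hatom⟩ ↦ (hdet x' x fun p hp ↦ ?_).mp hx'⟩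
    have hsign (c : Bool) := iff_of_eq (congrFun hatom (e (⟨p, hp⟩, c)))
    simp only [atom, Equiv.symm_apply_apply] at hsign
    exact sign_congr_of_atoms (by simpa using hsign true) (by simpa using hsign false)

lemma IsSemiAlgebraicOfComplexity.signDetermined {S : Set (Fin d → ℝ)}
    (hS : IsSemiAlgebraicOfComplexity d b S) : SignDetermined b b fun x ↦ x ∈ S := by
  obtain ⟨P, c, φ, hP, rfl⟩ := hS
  have hsigns := SignDetermined.pi fun i ↦ signDetermined_sign_eval (hP i)
  rw [Fintype.card_fin, mul_one] at hsigns
  refine hsigns.of_congr fun x x' h ↦ congrArg φ (funext fun i ↦ ?_)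
  have hsign : SignType.sign (eval x (P i)) = SignType.sign (eval x' (P i)) := congrFun h i
  have hneg : eval x (P i) < 0 ↔ eval x' (P i) < 0 := by
    rw [← sign_eq_neg_one_iff, hsign, sign_eq_neg_one_iff]
  have hzero : eval x (P i) = 0 ↔ eval x' (P i) = 0 := by
    rw [← sign_eq_zero_iff, hsign, sign_eq_zero_iff]
  simp only [hneg, hzero]

lemma exists_eval_eq_eval_linearMap_comp {m : ℕ}
    (f : (Fin M → ℝ) →ₗ[ℝ] MvPolynomial σ ℝ) (hf : ∀ z, (f z).totalDegree ≤ m) :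
    ∃ p : MvPolynomial (σ ⊕ Fin M) ℝ, p.totalDegree ≤ m + 1 ∧
      ∀ w : σ ⊕ Fin M → ℝ, eval w p = eval (w ∘ Sum.inl) (f (w ∘ Sum.inr)) := by
  refine ⟨∑ i, rename Sum.inl (f (Pi.single i 1)) * X (Sum.inr i), ?_, fun w ↦ ?_⟩
  · exact totalDegree_finsetSum_le fun i _ ↦ (totalDegree_mul _ _).trans <|
      add_le_add ((totalDegree_rename_le _ _).trans (hf _)) (totalDegree_X _).le
  · conv_rhs => rw [pi_eq_sum_univ' (w ∘ Sum.inr), map_sum, map_sum]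
    simp [eval_rename, mul_comm]

lemma signDetermined_incidence {S : Set (Fin d → ℝ)} (hS : IsSemiAlgebraicOfComplexity d b S)
    (hbk : b ≤ k) (c : Fin k → Bool) (f : Fin k → (Fin M → ℝ) →ₗ[ℝ] MvPolynomial (Fin d) ℝ)
    (hf : ∀ j z, (f j z).totalDegree ≤ 2 ^ (j : ℕ)) :
    SignDetermined (2 ^ k) (2 ^ k) fun w : Fin d ⊕ Fin M → ℝ ↦ w ∘ Sum.inl ∈ S ∧
      ∀ j, if c j then 0 < eval (w ∘ Sum.inl) (f j (w ∘ Sum.inr))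
        else eval (w ∘ Sum.inl) (f j (w ∘ Sum.inr)) < 0 := by
  choose p hp hpeval using fun j ↦ exists_eval_eq_eval_linearMap_comp (f j) (hf j)
  have hdeg (j : Fin k) : (p j).totalDegree ≤ 2 ^ k :=
    calc (p j).totalDegree ≤ 2 ^ (j : ℕ) + 1 := hp j
      _ ≤ 2 ^ (j : ℕ) + 2 ^ (j : ℕ) := by gcongr; exact Nat.one_le_two_pow
      _ = 2 ^ ((j : ℕ) + 1) := by ring
      _ ≤ 2 ^ k := Nat.pow_le_pow_right two_pos j.2
  have hsigns := SignDetermined.pi fun j ↦ signDetermined_sign_eval (hdeg j)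
  have hcard : b + Fintype.card (Fin k) * 1 ≤ 2 ^ k := by
    rw [Fintype.card_fin]
    rcases k with - | k
    · omega
    · have : k < 2 ^ k := Nat.lt_two_pow_self
      omega
  refine (((hS.signDetermined.comp_right Sum.inl).mono le_rfl
    (hbk.trans Nat.lt_two_pow_self.le)).prodMk hsigns |>.mono hcard le_rfl).of_congr
    fun w w' h ↦ ?_
  obtain ⟨hmem, hsign⟩ := Prod.mk.inj h
  simp only [← hpeval, ← sign_eq_one_iff, ← sign_eq_neg_one_iff, hmem, congrFun hsign _]

end Incidence

section Complexity

variable {d b k M : ℕ}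

lemma signDetermined_incidence_image {V : Fin k → Submodule ℝ (MvPolynomial (Fin d) ℝ)}
    (hV : ∀ j, ∀ p ∈ V j, p.totalDegree ≤ 2 ^ (j : ℕ)) {S : Set (Fin d → ℝ)}
    (hS : IsSemiAlgebraicOfComplexity d b S) (hk : 1 ≤ k) (hbk : b ≤ k) (σ : Fin k → Bool)
    (e : ((j : Fin k) → V j) ≃ₗ[ℝ] (Fin M → ℝ)) :
    SignDetermined ((2 ^ k) ^ (2 ^ k) ^ 24 ^ d) ((2 ^ k) ^ 24 ^ d) fun z ↦
      z ∈ e '' {y : (j : Fin k) → V j |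
        (S ∩ {u : Fin d → ℝ | ∀ j : Fin k,
          if σ j then 0 < eval u (y j : MvPolynomial (Fin d) ℝ)
          else eval u (y j : MvPolynomial (Fin d) ℝ) < 0}).Nonempty} := by
  let f (j : Fin k) : (Fin M → ℝ) →ₗ[ℝ] MvPolynomial (Fin d) ℝ :=
    (V j).subtype ∘ₗ LinearMap.proj j ∘ₗ e.symm.toLinearMap
  have htwo : 2 ≤ 2 ^ k := Nat.le_self_pow (Nat.one_le_iff_ne_zero.mp hk) 2
  refine ((signDetermined_incidence hS hbk σ f fun j z ↦
    hV j _ (e.symm z j).2).exists_fin d htwo htwo).of_congr fun z z' h ↦ ?_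
  simp only [e.image_eq_preimage_symm]
  exact h

lemma two_pow_le_exp (n : ℕ) : (2 : ℝ) ^ n ≤ Real.exp n := by
  rw [← Real.exp_one_pow]
  exact pow_le_pow_left₀ two_pos.le (by linarith [Real.add_one_le_exp 1]) n

lemma two_pow_pow_mul_two_le_exp (k c : ℕ) :
    (((2 ^ k) ^ (2 ^ k) ^ c * 2 : ℕ) : ℝ) ≤ Real.exp (2 ^ (k * (c + 1))) := by
  have hexp : k * (2 ^ k) ^ c + 1 ≤ 2 ^ (k * (c + 1)) :=
    calc k * (2 ^ k) ^ c + 1 ≤ (k + 1) * (2 ^ k) ^ c := by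
          rw [add_one_mul]; gcongr; exact Nat.one_le_pow _ _ (by positivity)
      _ ≤ 2 ^ k * (2 ^ k) ^ c := by gcongr; exact Nat.lt_two_pow_self
      _ = 2 ^ (k * (c + 1)) := by rw [← pow_succ', pow_mul]
  calc (((2 ^ k) ^ (2 ^ k) ^ c * 2 : ℕ) : ℝ) = 2 ^ (k * (2 ^ k) ^ c + 1) := by
        push_cast; rw [pow_succ, pow_mul]
    _ ≤ Real.exp (k * (2 ^ k) ^ c + 1 : ℕ) := two_pow_le_exp _
    _ ≤ Real.exp (2 ^ (k * (c + 1))) := Real.exp_le_exp.mpr (mod_cast hexp)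

lemma two_rpow_div_rpow_mul (k c : ℕ) (hd : d ≠ 0) :
    ((2 : ℝ) ^ ((k : ℝ) / d)) ^ ((d : ℝ) * c) = 2 ^ (k * c) := by
  rw [← Real.rpow_mul two_pos.le, ← Real.rpow_natCast]
  congr 1
  push_cast
  field_simp

theorem ISsigma_semialgebraic_low_complexity_general (d : ℕ) (hd : 1 ≤ d) :
    ∃ C : ℝ, 0 < C ∧
      ∀ b k : ℕ, 1 ≤ k → b ≤ k →
      ∀ D : ℝ, D = 2 ^ ((k : ℝ) / (d : ℝ)) →
      ∀ V : Fin k → Submodule ℝ (MvPolynomial (Fin d) ℝ),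
        (∀ j, ∀ p ∈ V j, p.totalDegree ≤ 2 ^ (j : ℕ)) →
      ∀ S : Set (Fin d → ℝ), IsSemiAlgebraicOfComplexity d b S →
      ∀ σ : Fin k → Bool,
      ∀ (M : ℕ) (e : ((j : Fin k) → V j) ≃ₗ[ℝ] (Fin M → ℝ)),
        ∃ L : ℕ, (L : ℝ) ≤ Real.exp (D ^ C) ∧
          DefinedByPolys
            (e '' {y : (j : Fin k) → V j |
              (S ∩ {u : Fin d → ℝ | ∀ j : Fin k,
                if σ j then 0 < eval u (y j : MvPolynomial (Fin d) ℝ)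
                else eval u (y j : MvPolynomial (Fin d) ℝ) < 0}).Nonempty})
            L (D ^ (C * d)) := by
  refine ⟨d * (24 ^ d + 1 : ℕ), by positivity, ?_⟩
  rintro b k hk hbk D rfl V hV S hS σ M e
  have hD := two_rpow_div_rpow_mul k (24 ^ d + 1) (Nat.one_le_iff_ne_zero.mp hd)
  have hdeg : (((2 ^ k) ^ 24 ^ d : ℕ) : ℝ) ≤
      ((2 : ℝ) ^ ((k : ℝ) / d)) ^ ((d : ℝ) * (24 ^ d + 1 : ℕ) * d) := by
    rw [Real.rpow_mul_natCast (by positivity), hD, ← pow_mul]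
    push_cast
    rw [← pow_mul]
    exact pow_le_pow_right₀ one_le_two
      ((Nat.mul_le_mul_left k (Nat.le_succ _)).trans (Nat.le_mul_of_pos_right _ hd))
  obtain ⟨L, hL, hdef⟩ :=
    (signDetermined_incidence_image hV hS hk hbk σ e).definedByPolys hdeg
  refine ⟨L, ?_, hdef⟩
  rw [hD]
  exact le_trans (mod_cast hL) (two_pow_pow_mul_two_le_exp k (24 ^ d))

lemma le_of_two_pow_le_two_rpow_div (h : (2 : ℝ) ^ b ≤ 2 ^ ((k : ℝ) / d)) (hd : 1 ≤ d) :
    b ≤ k := by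
  rw [← Real.rpow_natCast, Real.rpow_le_rpow_left_iff one_lt_two] at h
  exact_mod_cast h.trans (div_le_self k.cast_nonneg (mod_cast hd))

lemma lt_choose_add (m : ℕ) (hd : 1 ≤ d) : m < Nat.choose (m + d) d := by
  calc m < m + 1 := lt_add_one m
    _ = (m + 1).choose 1 := (Nat.choose_one_right _).symm
    _ = (m + 1).choose m := (Nat.choose_symm_add).symm
    _ ≤ (m + d).choose m := Nat.choose_le_choose m (by omega)
    _ = (m + d).choose d := Nat.choose_symm_add

end Complexity

/-- **Complexity of the sets `I_{S,σ}`.** Fix `b, d ≥ 1`, `k ≥ 1`, `D = 2^{k/d} ≥ 2^b`, and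
subspaces `𝕍_1,…,𝕍_k` as in the definition of `𝕐_k = 𝕍_1 × ⋯ × 𝕍_k`. There is a constant
`C = C(b,d)` such that for every semi-algebraic `S ⊆ ℝ^d` of complexity at most `b` and every
strict sign condition `σ ∈ {−1,1}^k` (encoded by `Bool`, `true ↦ +1`), the set
`I_{S,σ} = {y ∈ 𝕐_k : S ∩ {σ_1 P_1 > 0,…,σ_k P_k > 0} ≠ ∅}` is semi-algebraic (in any linear
coordinate system on `𝕐_k`), defined by at most `e^{D^C}` polynomials, each of degree at most
`D^{C·d}`. -/
theorem ISsigma_semialgebraic_low_complexity (b d : ℕ) (hb : 1 ≤ b) (hd : 1 ≤ d) :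
    ∃ C : ℝ, 0 < C ∧
      ∀ (k : ℕ), 1 ≤ k →
      ∀ D : ℝ, D = 2 ^ ((k : ℝ) / (d : ℝ)) → (2 : ℝ) ^ b ≤ D →
      -- `Dj j` is the least positive integer with `binom(Dj j + d, d) > 2^{j-1}`
      ∀ Dj : Fin k → ℕ,
        (∀ j : Fin k,
          IsLeast {m : ℕ | 0 < m ∧ 2 ^ (j : ℕ) < Nat.choose (m + d) d} (Dj j)) →
      -- the `2^{j-1}`-dimensional subspaces `𝕍_j` of polynomials of degree at most `Dj j`
      ∀ V : Fin k → Submodule ℝ (MvPolynomial (Fin d) ℝ),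
        (∀ j, Module.finrank ℝ (V j) = 2 ^ (j : ℕ)) →
        (∀ j, ∀ p ∈ V j, p.totalDegree ≤ Dj j) →
      ∀ S : Set (Fin d → ℝ), IsSemiAlgebraicOfComplexity d b S →
      ∀ σ : Fin k → Bool,
      ∀ (M : ℕ) (e : ((j : Fin k) → V j) ≃ₗ[ℝ] (Fin M → ℝ)),
        ∃ L : ℕ, (L : ℝ) ≤ Real.exp (D ^ C) ∧
          DefinedByPolys
            ((⇑e) '' {y : (j : Fin k) → V j |
              (S ∩ {u : Fin d → ℝ | ∀ j : Fin k,
                if σ j then 0 < eval u ((y j : MvPolynomial (Fin d) ℝ))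
                else eval u ((y j : MvPolynomial (Fin d) ℝ)) < 0}).Nonempty})
            L (D ^ (C * d)) := by
  obtain ⟨C, hC, hmain⟩ := ISsigma_semialgebraic_low_complexity_general d hd
  refine ⟨C, hC, fun k hk D hD hbD Dj hDj V _ hV ↦
    hmain b k hk (le_of_two_pow_le_two_rpow_div (hD ▸ hbD) hd) D hD V fun j p hp ↦ ?_⟩
  exact (hV j p hp).trans ((hDj j).2 ⟨by positivity, lt_choose_add _ hd⟩)
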